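/- arXiv:2204.02201 — 5 statements merged into one kernel-verified Lean document; each statement's English description precedes it below -/
import Mathlib

section
/- For a word x in Z_m^n chosen uniformly at random, the expected size of the FLL ball of radius 1 around x equals n^2(m + 1/m - 2) + 2 - n/m + (m^(n-1) - 1)/(m^(n-1)(m-1)). -/
open Finset

/-- The (0-indexed, inclusive) segment `x_i,…,x_j` is alternating, i.e. of the
form `abab…` : adjacent symbols differ and the segment has period 2. -/
def IsAltOn {m : ℕ} (x : ℕ → Fin m) (i j : ℕ) : Prop :=
  (∀ k ∈ Finset.Ico i j, x k ≠ x (k + 1)) ∧ ∀ k ∈ Finset.Ico i (j - 1), x k = x (k + 2)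

instance {m : ℕ} (x : ℕ → Fin m) (i j : ℕ) : Decidable (IsAltOn x i j) :=
  inferInstanceAs (Decidable (_ ∧ _))

/-- The set of (0-indexed, inclusive) index pairs of maximal alternating segments
of the word `x_0,…,x_{n-1}`. -/
def altSegs {m : ℕ} (n : ℕ) (x : ℕ → Fin m) : Finset (ℕ × ℕ) :=
  (Finset.range n ×ˢ Finset.range n).filter (fun p => p.1 ≤ p.2 ∧ IsAltOn x p.1 p.2 ∧
    (p.1 = 0 ∨ ¬ IsAltOn x (p.1 - 1) p.2) ∧ (p.2 = n - 1 ∨ ¬ IsAltOn x p.1 (p.2 + 1)))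

/-- `a(x)` : the number of maximal alternating segments of `x_0,…,x_{n-1}`. -/
def aCount {m : ℕ} (n : ℕ) (x : ℕ → Fin m) : ℕ := (altSegs n x).card

/-- `∑ s_i` : the sum of the lengths of the maximal alternating segments. -/
def sumLen {m : ℕ} (n : ℕ) (x : ℕ → Fin m) : ℕ := ∑ p ∈ altSegs n x, (p.2 - p.1 + 1)

/-- `∑ s_i²` : the sum of the squares of the lengths of the maximal alternating segments. -/
def sumLenSq {m : ℕ} (n : ℕ) (x : ℕ → Fin m) : ℕ := ∑ p ∈ altSegs n x, (p.2 - p.1 + 1) ^ 2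

/-- `ρ(x)` : the number of runs of the word `x_0,…,x_{n-1}`. -/
def rho {m : ℕ} (n : ℕ) (x : ℕ → Fin m) : ℕ :=
  1 + ((Finset.range (n - 1)).filter (fun i => x i ≠ x (i + 1))).card

/-- `h(x)` : the length of the first maximal alternating segment of `x_0,…,x_{n-1}`. -/
def headAlt {m : ℕ} (n : ℕ) (x : ℕ → Fin m) : ℕ :=
  ((Finset.range n).filter (fun j => IsAltOn x 0 j)).card

/-- `t(x)` : the length of the last maximal alternating segment of `x_0,…,x_{n-1}`. -/
def tailAlt {m : ℕ} (n : ℕ) (x : ℕ → Fin m) : ℕ :=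
  ((Finset.range n).filter (fun j => IsAltOn x (n - 1 - j) (n - 1))).card

/-- Extend a word of length `n` to a function `ℕ → Fin m` (junk value `0` beyond `n`). -/
def extWord {m : ℕ} (n : ℕ) (hm : 0 < m) (y : Fin n → Fin m) : ℕ → Fin m :=
  fun i => if h : i < n then y ⟨i, h⟩ else ⟨0, hm⟩

/-- The FLL ball of radius 1 around `x` : all words `y` of length `n` sharing with `x`
a common subsequence of length `n - 1` (equivalently, `d_l(x,y) ≤ 1`). -/
def L1ball {m : ℕ} (n : ℕ) (x : Fin n → Fin m) : Set (Fin n → Fin m) :=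
  {y | ∃ z : List (Fin m), z.length = n - 1 ∧ z.Sublist (List.ofFn x) ∧ z.Sublist (List.ofFn y)}

/-- `|L_1(x)|` : the size of the FLL ball of radius 1 around `x`. -/
noncomputable def L1size {m : ℕ} (n : ℕ) (x : Fin n → Fin m) : ℕ := (L1ball n x).ncard

/-- `f_n(y)` for binary words `y` of length `len` : `ρ(y)·n - (1/2)∑ s_j²`. -/
noncomputable def fB (n len : ℕ) (y : ℕ → Fin 2) : ℝ :=
  (rho len y : ℝ) * n - (sumLenSq len y : ℝ) / 2

/-- `f_{m,n}(y)` for words `y` of length `len` over `Z_m` :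
`ρ(y)(mn-n-1) - (1/2)∑ s_j² + (3/2)∑ s_j - a(y)`. -/
noncomputable def fM (m n len : ℕ) (y : ℕ → Fin m) : ℝ :=
  (rho len y : ℝ) * ((m : ℝ) * n - n - 1) - (sumLenSq len y : ℝ) / 2
    + 3 / 2 * (sumLen len y : ℝ) - (aCount len y : ℝ)

/-!
Count the pairs of words of length `n + 1` at distance at most one, over an alphabet of size `q`,
by recursion on `n`, comparing first letters. If they agree, delete both: this leaves two words of
length `n` at distance at most one. If they are `a ≠ b`, a common subsequence of length `n` of
`a :: u` and `b :: v` omits the first letter of one of them, so it is `u` or `v`, and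
inclusion–exclusion applies to the relations `u <+ b :: v` and `v <+ a :: u`. Each of them has
`q ^ n * (1 + n * (1 - 1 / q))` solutions. Both hold exactly when, up to some position, `u` reads
`b a b a …` and `v` reads `a b a b …`, and they agree from there on, which gives
`∑ j ≤ n, q ^ j` solutions.
-/

namespace FLL

open List (ofFn)
open scoped List

section Words

variable {α : Type*}

/-- The words `u` and `v` have a common subsequence of length `k`. For words of length `k + 1`
this is the relation `d_l(u, v) ≤ 1`. -/
def HasCommonSublist (k : ℕ) (u v : List α) : Prop :=
  ∃ z : List α, z.length = k ∧ z <+ u ∧ z <+ v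

/-- Both tails `u` and `v` are common subsequences of the words `a :: u` and `b :: v`. Pairs with
this property are counted twice when the ball around `a :: u` is enumerated by common tails. -/
def TailsShared (a b : α) (u v : List α) : Prop :=
  u <+ b :: v ∧ v <+ a :: u

lemma cons_sublist_cons_iff_eq_of_ne {a b : α} (hab : a ≠ b) {u v : List α}
    (h : (a :: u).length = v.length) : a :: u <+ b :: v ↔ a :: u = v := by
  rw [List.cons_sublist_cons']
  simp only [hab, false_and, or_false]
  exact ⟨fun hs => hs.eq_of_length h, fun he => he ▸ List.Sublist.refl _⟩

lemma hasCommonSublist_zero (u v : List α) : HasCommonSublist 0 u v :=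
  ⟨[], rfl, List.nil_sublist u, List.nil_sublist v⟩

lemma hasCommonSublist_cons_cons_self {k : ℕ} {a : α} {u v : List α} :
    HasCommonSublist (k + 1) (a :: u) (a :: v) ↔ HasCommonSublist k u v := by
  constructor
  · rintro ⟨z, hz, hu, hv⟩
    exact ⟨z.tail, by simp [hz], hu.tail, hv.tail⟩
  · rintro ⟨z, hz, hu, hv⟩
    exact ⟨a :: z, by simp [hz], hu.cons_cons a, hv.cons_cons a⟩

lemma hasCommonSublist_cons_cons_of_ne {a b : α} (hab : a ≠ b) {u v : List α}
    (h : u.length = v.length) :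
    HasCommonSublist u.length (a :: u) (b :: v) ↔ u <+ b :: v ∨ v <+ a :: u := by
  constructor
  · rintro ⟨z, hz, hu, hv⟩
    cases z with
    | nil => exact .inl (List.eq_nil_of_length_eq_zero hz.symm ▸ List.nil_sublist _)
    | cons c z =>
      by_cases hca : c = a
      · have hzv := (cons_sublist_cons_iff_eq_of_ne (hca ▸ hab) (hz.trans h)).1 hv
        exact .inr (hzv ▸ hu)
      · have hzu := (cons_sublist_cons_iff_eq_of_ne hca hz).1 hu
        exact .inl (hzu ▸ hv)
  · rintro (huv | hvu)
    · exact ⟨u, rfl, List.sublist_cons_self a u, huv⟩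
    · exact ⟨v, h.symm, hvu, List.sublist_cons_self b v⟩

lemma tailsShared_cons_cons {a b : α} (hab : a ≠ b) {c e : α} {u v : List α}
    (h : u.length = v.length) :
    TailsShared a b (c :: u) (e :: v) ↔
      c :: u = e :: v ∨ (c = b ∧ e = a) ∧ TailsShared b a u v := by
  have hlen : (c :: u).length = (e :: v).length := by simp only [List.length_cons, h]
  have tailsShared_self : c :: u = e :: v → TailsShared a b (c :: u) (e :: v) := fun he =>
    ⟨he ▸ List.sublist_cons_self b _, he ▸ List.sublist_cons_self a _⟩
  by_cases hcb : c = b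
  · by_cases hea : e = a
    · subst hcb hea
      simp [TailsShared, hab.symm]
    · simp only [hea, and_false, false_and, or_false]
      exact ⟨fun hs => ((cons_sublist_cons_iff_eq_of_ne hea hlen.symm).1 hs.2).symm,
        tailsShared_self⟩
  · simp only [hcb, false_and, or_false]
    exact ⟨fun hs => (cons_sublist_cons_iff_eq_of_ne hcb hlen).1 hs.1, tailsShared_self⟩

end Words

section Counting

variable {α : Type*} [Fintype α]

lemma sum_ofFn_succ {M : Type*} [AddCommMonoid M] (k : ℕ) (f : List α → M) :
    ∑ x : Fin (k + 1) → α, f (ofFn x) = ∑ a, ∑ x : Fin k → α, f (a :: ofFn x) := by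
  rw [← Fintype.sum_prod_type']
  refine (Fintype.sum_equiv (Fin.consEquiv fun _ => α) _ _ fun p => ?_).symm
  simp [Fin.consEquiv]

lemma sum_eq_add_card_sub_one_mul {R : Type*} [Ring R] {f : α → R} {r : R} (a : α)
    (hf : ∀ b, b ≠ a → f b = r) : ∑ b, f b = f a + (Fintype.card α - 1) * r := by
  classical
  rw [← Finset.add_sum_erase _ f (Finset.mem_univ a),
    Finset.sum_eq_card_nsmul fun b hb => hf b (Finset.ne_of_mem_erase hb),
    Finset.card_erase_of_mem (Finset.mem_univ a), Finset.card_univ, nsmul_eq_mul,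
    Nat.cast_pred (Fintype.card_pos_iff.2 ⟨a⟩)]

/-- The number of pairs of words of length `k` over the alphabet `α` related by `r`. Words are
indexed by `Fin k → α` and handed to `r` as lists. -/
noncomputable def pairCount (k : ℕ) (r : List α → List α → Prop) : ℕ :=
  ∑ x : Fin k → α, {y : Fin k → α | r (ofFn x) (ofFn y)}.ncard

variable {k : ℕ} {r s : List α → List α → Prop}

lemma pairCount_eq_sum_ite [DecidableRel r] :
    pairCount k r = ∑ x : Fin k → α, ∑ y : Fin k → α, if r (ofFn x) (ofFn y) then 1 else 0 := by
  classical
  simp only [pairCount, Set.ncard_eq_toFinset_card', Set.toFinset_ofPred, Finset.card_filter]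

lemma pairCount_congr (h : ∀ u v, u.length = k → v.length = k → (r u v ↔ s u v)) :
    pairCount k r = pairCount k s := by
  simp only [pairCount, h _ _ List.length_ofFn List.length_ofFn]

lemma pairCount_eq_zero (h : ∀ u v, ¬ r u v) : pairCount k r = 0 := by
  simp [pairCount, h]

lemma pairCount_swap : pairCount k (fun u v => r v u) = pairCount k r := by
  classical
  rw [pairCount_eq_sum_ite, pairCount_eq_sum_ite, Finset.sum_comm]

lemma pairCount_or_add_pairCount_and :
    pairCount k (fun u v => r u v ∨ s u v) + pairCount k (fun u v => r u v ∧ s u v) =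
      pairCount k r + pairCount k s := by
  simp only [pairCount, ← Finset.sum_add_distrib]
  exact Finset.sum_congr rfl fun x _ => Set.ncard_union_add_ncard_inter _ _

lemma pairCount_and_left (p : Prop) [Decidable p] :
    pairCount k (fun u v => p ∧ r u v) = if p then pairCount k r else 0 := by
  split_ifs with hp <;> simp [pairCount, hp]

lemma pairCount_succ :
    pairCount (k + 1) r = ∑ a, ∑ b, pairCount k (fun u v => r (a :: u) (b :: v)) := by
  classical
  simp only [pairCount_eq_sum_ite]
  rw [sum_ofFn_succ k fun u => ∑ y : Fin (k + 1) → α, if r u (ofFn y) then 1 else 0]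
  refine Finset.sum_congr rfl fun a _ => ?_
  rw [Finset.sum_comm (s := Finset.univ (α := α))]
  exact Finset.sum_congr rfl fun x _ =>
    sum_ofFn_succ k fun v => if r (a :: ofFn x) v then 1 else 0

lemma pairCount_eq : pairCount (α := α) k (· = ·) = Fintype.card α ^ k := by
  simp [pairCount, List.ofFn_inj]

lemma pairCount_cons_eq (a : α) :
    ∑ b, pairCount k (fun u v => a :: u = b :: v) = Fintype.card α ^ k := by
  classical
  simp only [List.cons.injEq, pairCount_and_left, Finset.sum_ite_eq, Finset.mem_univ, if_true,
    pairCount_eq]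

lemma pairCount_sublist_cons (b : α) (k : ℕ) :
    (pairCount k (fun u v => u <+ b :: v) : ℝ) =
      Fintype.card α ^ k * (1 + k * (1 - 1 / Fintype.card α)) := by
  have hq : (Fintype.card α : ℝ) ≠ 0 := Nat.cast_ne_zero.2 (Fintype.card_pos_iff.2 ⟨b⟩).ne'
  induction k generalizing b with
  | zero => simp [pairCount]
  | succ k ih =>
    have other_head : ∀ c, c ≠ b →
        ((∑ e, pairCount k (fun u v => c :: u <+ b :: e :: v) : ℕ) : ℝ) =
          Fintype.card α ^ k := by
      intro c hcb
      rw [← Nat.cast_pow, ← pairCount_cons_eq c]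
      exact congrArg _ <| Finset.sum_congr rfl fun e _ => pairCount_congr fun u v hu hv =>
        cons_sublist_cons_iff_eq_of_ne hcb (by simp [hu, hv])
    rw [pairCount_succ, Nat.cast_sum, sum_eq_add_card_sub_one_mul b other_head]
    simp only [List.cons_sublist_cons, Nat.cast_sum, ih, Finset.sum_const, Finset.card_univ,
      nsmul_eq_mul]
    push_cast
    field_simp
    ring

lemma pairCount_tailsShared_succ {a b : α} (hab : a ≠ b) (k : ℕ) :
    pairCount (k + 1) (TailsShared a b) =
      Fintype.card α ^ (k + 1) + pairCount k (TailsShared b a) := by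
  classical
  have split_heads : ∀ c e, pairCount k (fun u v => TailsShared a b (c :: u) (e :: v)) =
      pairCount k (fun u v => c :: u = e :: v) +
        if c = b ∧ e = a then pairCount k (TailsShared b a) else 0 := by
    intro c e
    have disjoint : pairCount k (fun u v => c :: u = e :: v ∧ (c = b ∧ e = a) ∧
        TailsShared b a u v) = 0 :=
      pairCount_eq_zero fun u v ⟨hce, ⟨hcb, hea⟩, _⟩ =>
        hab (hea.symm.trans ((List.cons.inj hce).1.symm.trans hcb))
    rw [← pairCount_and_left, ← pairCount_or_add_pairCount_and, disjoint, add_zero]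
    exact pairCount_congr fun u v hu hv => tailsShared_cons_cons hab (hu.trans hv.symm)
  simp only [pairCount_succ, split_heads, Finset.sum_add_distrib, pairCount_cons_eq, ite_and]
  simp [pow_succ']

lemma pairCount_tailsShared {a b : α} (hab : a ≠ b) (k : ℕ) :
    pairCount k (TailsShared a b) = ∑ j ∈ Finset.range (k + 1), Fintype.card α ^ j := by
  induction k generalizing a b with
  | zero => simp [pairCount, TailsShared]
  | succ k ih =>
    rw [pairCount_tailsShared_succ hab, ih hab.symm, Finset.sum_range_succ _ (k + 1), add_comm]

lemma pairCount_hasCommonSublist_cons_of_ne {a b : α} (hab : a ≠ b) (k : ℕ) :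
    (pairCount k (fun u v => HasCommonSublist k (a :: u) (b :: v)) : ℝ) =
      2 * (Fintype.card α ^ k * (1 + k * (1 - 1 / Fintype.card α))) -
        ∑ j ∈ Finset.range (k + 1), (Fintype.card α : ℝ) ^ j := by
  have tail_or_tail : pairCount k (fun u v => HasCommonSublist k (a :: u) (b :: v)) =
      pairCount k (fun u v => u <+ b :: v ∨ v <+ a :: u) :=
    pairCount_congr fun u v hu hv =>
      hu ▸ hasCommonSublist_cons_cons_of_ne hab (hu.trans hv.symm)
  have inclusion_exclusion :
      pairCount k (fun u v => HasCommonSublist k (a :: u) (b :: v)) +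
        pairCount k (TailsShared a b) =
      pairCount k (fun u v => u <+ b :: v) + pairCount k (fun u v => u <+ a :: v) := by
    rw [tail_or_tail, ← pairCount_swap (r := fun u v => u <+ a :: v)]
    exact pairCount_or_add_pairCount_and
  rw [pairCount_tailsShared hab] at inclusion_exclusion
  have cast_eq := congrArg (Nat.cast (R := ℝ)) inclusion_exclusion
  push_cast [pairCount_sublist_cons] at cast_eq
  linear_combination cast_eq

lemma pairCount_hasCommonSublist_succ (k : ℕ) :
    (pairCount (α := α) (k + 2) (HasCommonSublist (k + 1)) : ℝ) =
      Fintype.card α * pairCount (α := α) (k + 1) (HasCommonSublist k) +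
        Fintype.card α * (Fintype.card α - 1) *
          (2 * (Fintype.card α ^ (k + 1) * (1 + (k + 1) * (1 - 1 / Fintype.card α))) -
            ∑ j ∈ Finset.range (k + 2), (Fintype.card α : ℝ) ^ j) := by
  have sum_second_head (a : α) := sum_eq_add_card_sub_one_mul a fun b (hba : b ≠ a) =>
    pairCount_hasCommonSublist_cons_of_ne hba.symm (k + 1)
  rw [pairCount_succ]
  push_cast at sum_second_head ⊢
  simp only [sum_second_head, hasCommonSublist_cons_cons_self, Finset.sum_const,
    Finset.card_univ, nsmul_eq_mul]
  ring

end Counting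

lemma sum_L1size (m n : ℕ) :
    ∑ y : Fin n → Fin m, L1size n y = pairCount (α := Fin m) n (HasCommonSublist (n - 1)) :=
  rfl

end FLL

open FLL in
theorem stmt7_general {α : Type*} [Fintype α] [Nontrivial α] (n : ℕ) (hn : n ≠ 0) :
    (pairCount (α := α) n (HasCommonSublist (n - 1)) : ℝ) / (Fintype.card α : ℝ) ^ n
      = (n : ℝ) ^ 2 * ((Fintype.card α : ℝ) + 1 / Fintype.card α - 2) + 2
          - (n : ℝ) / Fintype.card α
          + ((Fintype.card α : ℝ) ^ (n - 1) - 1)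
            / ((Fintype.card α : ℝ) ^ (n - 1) * ((Fintype.card α : ℝ) - 1)) := by
  obtain ⟨k, rfl⟩ := Nat.exists_eq_add_one_of_ne_zero hn
  have one_lt_card : (1 : ℝ) < Fintype.card α := Nat.one_lt_cast.2 Fintype.one_lt_card
  have card_ne_zero : (Fintype.card α : ℝ) ≠ 0 := by positivity
  have card_sub_one_ne_zero : (Fintype.card α : ℝ) - 1 ≠ 0 := sub_ne_zero.2 one_lt_card.ne'
  clear hn
  simp only [Nat.add_sub_cancel]
  induction k with
  | zero => simp [pairCount, hasCommonSublist_zero, card_ne_zero]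
  | succ k ih =>
    rw [div_eq_iff (pow_ne_zero _ card_ne_zero)] at ih ⊢
    rw [pairCount_hasCommonSublist_succ, ih, geom_sum_eq one_lt_card.ne']
    push_cast
    field_simp
    ring

/-- For a uniformly random `x ∈ Z_m^n`, the expected size of the FLL ball of radius one
equals `n²(m + 1/m - 2) + 2 - n/m + (m^(n-1) - 1)/(m^(n-1)(m-1))`. -/
theorem stmt7 (n m : ℕ) (hn : 2 ≤ n) (hm : 2 ≤ m) :
    (∑ y : Fin n → Fin m, (L1size n y : ℝ)) / (m : ℝ) ^ n
      = (n : ℝ) ^ 2 * ((m : ℝ) + 1 / m - 2) + 2 - (n : ℝ) / m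
          + ((m : ℝ) ^ (n - 1) - 1) / ((m : ℝ) ^ (n - 1) * ((m : ℝ) - 1)) := by
  have : Nontrivial (Fin m) := Fin.nontrivial_iff_two_le.2 hm
  rw [← Nat.cast_sum, FLL.sum_L1size]
  simpa only [Fintype.card_fin] using stmt7_general (α := Fin m) n (by lia)
end

section
/- For every x ∈ Z_m^n, |L_1(x)| = ρ(x)(mn - n - 1) + 2 - (1/2)∑_{i=1}^{a(x)} s_i^2 + (3/2)∑_{i=1}^{a(x)} s_i - a(x), where s_i are the lengths of the maximal alternating segments of x. -/
open Finset

/-!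
Write `D` and `I` for the sets of words obtained by one deletion and by one insertion, `B` for the
ball and `q` for the size of the alphabet. Splitting words by their first letter gives
`D(a l) = {l} ∪ a D(l)`, hence `|D(x)| = ρ(x)`, and `|I(u)| = (|u| + 1)(q - 1) + 1`. In the same way
`B(a c u)` is the union of `a B(c u)`, of the words `b w` with `b ≠ a` and `w ∈ D(a c u)`, and of
`c I(u)`. If `a = c` the last part is absorbed by the first; if `a ≠ c` it overlaps the second in a
copy of `D(a c u) ∩ I(u)`, whose size is the length of the longest alternating prefix of `a c u`.
By induction `|B(x)| = ρ(x) ((q - 1) n - 1) + 2 - T(x)`, where `T(x)` counts the alternating factors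
of length at least three. Each of these lies in exactly one maximal alternating segment, and a
segment of length `s` contains `(s - 1).choose 2` of them, so that
`T(x) = ½ ∑ sᵢ² - (3/2) ∑ sᵢ + a(x)`.
-/

open scoped List

section IndelBall

variable {α : Type*}

/-- The set of words obtained from `l` by deleting one letter. -/
def deletionSphere (l : List α) : Set (List α) :=
  {w | w.length + 1 = l.length ∧ w <+ l}

/-- The set of words obtained from `l` by inserting one letter. -/
def insertionSphere (l : List α) : Set (List α) :=
  {w | w.length = l.length + 1 ∧ l <+ w}

/-- The set of words obtained from `l` by deleting one letter and then inserting one letter: for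
nonempty `l` this is the ball of radius one in the fixed-length Levenshtein metric, while
it is empty for `l = []`. -/
def indelBall (l : List α) : Set (List α) :=
  ⋃ z ∈ deletionSphere l, insertionSphere z

theorem mem_indelBall {l y : List α} :
    y ∈ indelBall l ↔ ∃ z ∈ deletionSphere l, y ∈ insertionSphere z := by
  simp only [indelBall, Set.mem_iUnion, exists_prop]

theorem cons_mem_image_cons {a b : α} {w : List α} {s : Set (List α)} :
    b :: w ∈ List.cons a '' s ↔ b = a ∧ w ∈ s := by
  simp [eq_comm, and_comm]

theorem cons_mem_image2_cons {b : α} {w : List α} {s : Set α} {t : Set (List α)} :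
    b :: w ∈ Set.image2 List.cons s t ↔ b ∈ s ∧ w ∈ t := by
  simp

theorem deletionSphere_nil : deletionSphere ([] : List α) = ∅ := by
  simp [deletionSphere]

theorem deletionSphere_cons (a : α) (l : List α) :
    deletionSphere (a :: l) = insert l (List.cons a '' deletionSphere l) := by
  ext w
  simp only [deletionSphere, Set.mem_ofPred_eq, List.length_cons, List.sublist_cons_iff,
    Set.mem_insert_iff, Set.mem_image]
  constructor
  · rintro ⟨hw, h | ⟨v, rfl, hv⟩⟩
    · exact .inl (h.eq_of_length (by omega))
    · exact .inr ⟨v, ⟨by simpa using hw, hv⟩, rfl⟩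
  · rintro (rfl | ⟨v, ⟨hw, hv⟩, rfl⟩)
    · exact ⟨rfl, .inl (List.Sublist.refl w)⟩
    · exact ⟨by simpa using hw, .inr ⟨v, rfl, hv⟩⟩

theorem mem_deletionSphere_cons_self (a : α) (l : List α) : l ∈ deletionSphere (a :: l) :=
  ⟨rfl, List.sublist_cons_self a l⟩

theorem mem_insertionSphere_cons (b : α) (u : List α) : b :: u ∈ insertionSphere u :=
  ⟨rfl, List.sublist_cons_self b u⟩

theorem cons_mem_insertionSphere_cons_self {a : α} {u w : List α} :
    a :: w ∈ insertionSphere (a :: u) ↔ w ∈ insertionSphere u := by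
  simp [insertionSphere]

theorem cons_mem_insertionSphere_of_head?_ne {b : α} {u w : List α} (h : u.head? ≠ some b) :
    b :: w ∈ insertionSphere u ↔ w = u := by
  constructor
  · rintro ⟨hw, hs⟩
    rcases List.sublist_cons_iff.1 hs with hs | ⟨v, rfl, -⟩
    · exact (hs.eq_of_length (by simpa using hw.symm)).symm
    · simp at h
  · rintro rfl
    exact mem_insertionSphere_cons b w

theorem cons_mem_insertionSphere_cons_of_ne {a b : α} {u w : List α} (h : b ≠ a) :
    b :: w ∈ insertionSphere (a :: u) ↔ w = a :: u :=
  cons_mem_insertionSphere_of_head?_ne (by simpa using h.symm)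

theorem insertionSphere_nil : insertionSphere ([] : List α) = Set.range ([·]) := by
  ext w
  simp [insertionSphere, List.length_eq_one_iff, eq_comm]

theorem insertionSphere_cons (a : α) (u : List α) :
    insertionSphere (a :: u) =
      List.cons a '' insertionSphere u ∪ (fun b ↦ b :: a :: u) '' {a}ᶜ := by
  ext w
  rcases w with _ | ⟨b, w⟩
  · simp [insertionSphere]
  · obtain rfl | hb := eq_or_ne b a
    · simp [cons_mem_insertionSphere_cons_self]
    · simp [cons_mem_insertionSphere_cons_of_ne hb, hb.symm, eq_comm]

theorem nil_notMem_indelBall (l : List α) : [] ∉ indelBall l := by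
  simp [mem_indelBall, insertionSphere]

theorem mem_indelBall_cons {a : α} {l y : List α} :
    y ∈ indelBall (a :: l) ↔
      y ∈ insertionSphere l ∨ ∃ z ∈ deletionSphere l, y ∈ insertionSphere (a :: z) := by
  simp [mem_indelBall, deletionSphere_cons]

theorem cons_mem_indelBall_cons_self {a c : α} {u w : List α} :
    a :: w ∈ indelBall (a :: c :: u) ↔ w ∈ indelBall (c :: u) := by
  simp only [mem_indelBall_cons (a := a), cons_mem_insertionSphere_cons_self, ← mem_indelBall,
    or_iff_right_iff_imp]
  rintro ⟨hw, hs⟩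
  exact mem_indelBall.2 ⟨u, mem_deletionSphere_cons_self c u, by simpa using hw, hs.tail⟩

theorem cons_mem_indelBall_cons_of_ne {a b : α} {l w : List α} (h : b ≠ a) :
    b :: w ∈ indelBall (a :: l) ↔
      b :: w ∈ insertionSphere l ∨ w ∈ List.cons a '' deletionSphere l := by
  simp only [mem_indelBall_cons, cons_mem_insertionSphere_cons_of_ne h, Set.mem_image, eq_comm]

theorem indelBall_cons_cons (a c : α) (u : List α) :
    indelBall (a :: c :: u) =
      List.cons a '' indelBall (c :: u) ∪
        (Set.image2 List.cons {a}ᶜ (deletionSphere (a :: c :: u)) ∪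
          List.cons c '' insertionSphere u) := by
  ext y
  rcases y with _ | ⟨b, w⟩
  · simp [nil_notMem_indelBall]
  obtain rfl | hb := eq_or_ne b a
  · have absorbed : w ∈ insertionSphere u → c = b → w ∈ indelBall (c :: u) := fun hw _ ↦
      mem_indelBall.2 ⟨u, mem_deletionSphere_cons_self c u, hw⟩
    simpa [cons_mem_indelBall_cons_self] using absorbed
  rw [cons_mem_indelBall_cons_of_ne hb, deletionSphere_cons a]
  obtain rfl | hc := eq_or_ne b c
  · have hmem : w = b :: u → w ∈ insertionSphere u := fun h ↦ h ▸ mem_insertionSphere_cons b u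
    simp only [cons_mem_insertionSphere_cons_self, cons_mem_image_cons, cons_mem_image2_cons,
      Set.mem_union, Set.mem_insert_iff, Set.mem_compl_singleton_iff]
    tauto
  · simp only [cons_mem_insertionSphere_cons_of_ne hc, cons_mem_image_cons, cons_mem_image2_cons,
      Set.mem_union, Set.mem_insert_iff, Set.mem_compl_singleton_iff]
    tauto

theorem disjoint_image_cons_of_head?_ne {a : α} {s t : Set (List α)}
    (h : ∀ w ∈ t, w.head? ≠ some a) : Disjoint (List.cons a '' s) t := by
  rw [Set.disjoint_left]
  rintro _ ⟨w, -, rfl⟩ hw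
  exact h _ hw rfl

theorem ncard_image_cons (a : α) (s : Set (List α)) : (List.cons a '' s).ncard = s.ncard :=
  Set.ncard_image_of_injective s List.cons_injective

theorem ncard_image2_cons (s : Set α) (t : Set (List α)) :
    (Set.image2 List.cons s t).ncard = s.ncard * t.ncard := by
  rw [← Set.image_prod, Set.ncard_image_of_injective, Set.ncard_prod]
  rintro ⟨a, u⟩ ⟨b, v⟩ h
  simpa using h

/-- The length of the longest prefix of the word of the form `a, c, a, c, …`. -/
def altPrefixLength [DecidableEq α] : α → α → List α → ℕ
  | _, _, [] => 0
  | a, c, d :: u => if d = a then altPrefixLength c a u + 1 else 0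

/-- The number of alternating factors of length at least three, counted by the
position at which they occur. -/
def altFactorCount [DecidableEq α] : List α → ℕ
  | a :: c :: u => altFactorCount (c :: u) + if a = c then 0 else altPrefixLength a c u
  | _ => 0

theorem length_destutter_cons_cons [DecidableEq α] (a c : α) (u : List α) :
    ((a :: c :: u).destutter (· ≠ ·)).length =
      ((c :: u).destutter (· ≠ ·)).length + if a = c then 0 else 1 := by
  rw [List.destutter_cons_cons, List.destutter_cons']
  obtain rfl | h := eq_or_ne a c <;> simp [*]

instance (l : List α) : Finite (deletionSphere l) :=
  (l.sublists.finite_toSet.subset fun _ hw ↦ List.mem_sublists.2 hw.2).to_subtype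

instance [Finite α] (l : List α) : Finite (insertionSphere l) :=
  ((List.finite_length_eq α (l.length + 1)).subset fun _ hw ↦ hw.1).to_subtype

instance [Finite α] (l : List α) : Finite (indelBall l) :=
  (Set.Finite.biUnion (Set.toFinite _) fun _ _ ↦ Set.toFinite _).to_subtype

theorem ncard_deletionSphere [DecidableEq α] (l : List α) :
    (deletionSphere l).ncard = (l.destutter (· ≠ ·)).length := by
  induction l with
  | nil => simp [deletionSphere_nil]
  | cons a l ih =>
    rcases l with _ | ⟨c, u⟩
    · simp [deletionSphere_cons, deletionSphere_nil]
    rw [deletionSphere_cons, length_destutter_cons_cons, ← ih,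
      ← ncard_image_cons a (deletionSphere (c :: u))]
    have hmem : c :: u ∈ List.cons a '' deletionSphere (c :: u) ↔ a = c := by
      simp [mem_deletionSphere_cons_self, eq_comm]
    split_ifs with h
    · rw [Set.insert_eq_of_mem (hmem.2 h), add_zero]
    · rw [Set.ncard_insert_of_notMem (hmem.not.2 h)]

theorem deletionSphere_inter_insertionSphere_cons_self (a c : α) (u : List α) :
    deletionSphere (a :: c :: a :: u) ∩ insertionSphere (a :: u) =
      insert (c :: a :: u) (List.cons a '' (deletionSphere (c :: a :: u) ∩ insertionSphere u)) := by
  ext w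
  rcases w with _ | ⟨b, w⟩
  · simp [deletionSphere]
  rw [deletionSphere_cons]
  simp only [Set.mem_inter_iff, Set.mem_insert_iff, cons_mem_image_cons]
  grind [mem_insertionSphere_cons, cons_mem_insertionSphere_cons_self]

theorem deletionSphere_inter_insertionSphere_of_head?_ne {a c : α} {u : List α}
    (h : u.head? ≠ some a) :
    deletionSphere (a :: c :: u) ∩ insertionSphere u = {c :: u, a :: u} := by
  ext w
  rw [deletionSphere_cons]
  simp only [Set.mem_inter_iff, Set.mem_insert_iff, Set.mem_image, Set.mem_singleton_iff]
  grind [mem_insertionSphere_cons, cons_mem_insertionSphere_of_head?_ne,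
    mem_deletionSphere_cons_self]

theorem ncard_deletionSphere_inter_insertionSphere [DecidableEq α] {a c : α} (h : a ≠ c)
    (u : List α) :
    (deletionSphere (a :: c :: u) ∩ insertionSphere u).ncard = altPrefixLength a c u + 2 := by
  by_cases hu : u.head? = some a
  · obtain ⟨v, rfl⟩ := List.head?_eq_some_iff.1 hu
    rw [deletionSphere_inter_insertionSphere_cons_self, Set.ncard_insert_of_notMem,
      ncard_image_cons, ncard_deletionSphere_inter_insertionSphere h.symm v]
    · simp [altPrefixLength]
    · simp [h]
  · rw [deletionSphere_inter_insertionSphere_of_head?_ne hu, Set.ncard_pair (by simpa using h.symm)]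
    rcases u with _ | ⟨d, u⟩
    · rfl
    · simp_all [altPrefixLength]
termination_by u.length

variable [Finite α]

theorem ncard_compl_singleton (a : α) : (({a}ᶜ : Set α).ncard : ℤ) = Nat.card α - 1 := by
  have := Set.ncard_add_ncard_compl ({a} : Set α)
  rw [Set.ncard_singleton] at this
  omega

theorem ncard_insertionSphere (u : List α) :
    ((insertionSphere u).ncard : ℤ) = (u.length + 1) * (Nat.card α - 1) + 1 := by
  induction u with
  | nil =>
    rw [insertionSphere_nil, ← Set.image_univ,
      Set.ncard_image_of_injective _ List.singleton_injective, Set.ncard_univ]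
    simp
  | cons a u ih =>
    have hdisj : Disjoint (List.cons a '' insertionSphere u) ((fun b ↦ b :: a :: u) '' {a}ᶜ) := by
      apply disjoint_image_cons_of_head?_ne
      simp
    rw [insertionSphere_cons, Set.ncard_union_eq hdisj, ncard_image_cons,
      Set.ncard_image_of_injective _ fun b c h ↦ (List.cons.inj h).1]
    push_cast [List.length_cons]
    rw [ih, ncard_compl_singleton]
    ring

theorem ncard_indelBall_cons_cons_self (a : α) (u : List α) :
    ((indelBall (a :: a :: u)).ncard : ℤ) =
      (indelBall (a :: u)).ncard + (Nat.card α - 1) * (deletionSphere (a :: a :: u)).ncard := by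
  have habsorb : List.cons a '' insertionSphere u ⊆ List.cons a '' indelBall (a :: u) :=
    Set.image_mono fun w hw ↦ mem_indelBall.2 ⟨u, mem_deletionSphere_cons_self a u, hw⟩
  rw [indelBall_cons_cons, Set.union_left_comm, Set.union_eq_self_of_subset_right habsorb,
    Set.union_comm, Set.ncard_union_eq, ncard_image_cons, ncard_image2_cons]
  · push_cast
    rw [ncard_compl_singleton]
  · apply disjoint_image_cons_of_head?_ne
    rintro _ ⟨b, hb, w, -, rfl⟩
    simpa using hb

theorem ncard_indelBall_cons_cons_of_ne {a c : α} (h : a ≠ c) (u : List α) :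
    ((indelBall (a :: c :: u)).ncard : ℤ) =
      (indelBall (c :: u)).ncard + (Nat.card α - 1) * (deletionSphere (a :: c :: u)).ncard +
        (insertionSphere u).ncard - (deletionSphere (a :: c :: u) ∩ insertionSphere u).ncard := by
  have hinter : Set.image2 List.cons {a}ᶜ (deletionSphere (a :: c :: u)) ∩
      List.cons c '' insertionSphere u =
        List.cons c '' (deletionSphere (a :: c :: u) ∩ insertionSphere u) := by
    ext w
    simp only [Set.mem_inter_iff, Set.mem_image2, Set.mem_image]
    grind
  have hie := Set.ncard_union_add_ncard_inter
    (Set.image2 List.cons {a}ᶜ (deletionSphere (a :: c :: u))) (List.cons c '' insertionSphere u)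
  rw [hinter, ncard_image_cons, ncard_image_cons, ncard_image2_cons] at hie
  rw [indelBall_cons_cons, Set.ncard_union_eq, ncard_image_cons, ← ncard_compl_singleton a]
  · zify at hie
    push_cast
    linarith
  · apply disjoint_image_cons_of_head?_ne
    rintro _ (⟨b, hb, w, -, rfl⟩ | ⟨w, -, rfl⟩)
    · simpa using hb
    · simpa using h.symm

theorem ncard_indelBall [DecidableEq α] {l : List α} (hl : l ≠ []) :
    ((indelBall l).ncard : ℤ) =
      (l.destutter (· ≠ ·)).length * ((Nat.card α - 1) * l.length - 1) + 2 - altFactorCount l := by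
  induction l with
  | nil => contradiction
  | cons a l ih =>
    rcases l with _ | ⟨c, u⟩
    · have hball : indelBall [a] = insertionSphere [] := by
        simp [indelBall, deletionSphere_cons, deletionSphere_nil]
      have hcount : altFactorCount [a] = 0 := rfl
      rw [hball, hcount, ncard_insertionSphere, List.destutter_singleton, List.length_singleton]
      push_cast [List.length_nil]
      ring
    specialize ih (List.cons_ne_nil c u)
    obtain rfl | h := eq_or_ne a c
    · rw [ncard_indelBall_cons_cons_self, ih, ncard_deletionSphere, length_destutter_cons_cons]
      push_cast [altFactorCount, List.length_cons, if_pos rfl]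
      ring
    · rw [ncard_indelBall_cons_cons_of_ne h, ih, ncard_deletionSphere, ncard_insertionSphere,
        ncard_deletionSphere_inter_insertionSphere h, length_destutter_cons_cons]
      push_cast [altFactorCount, List.length_cons, if_neg h]
      ring

end IndelBall

section Alternating

variable {m : ℕ} {x : ℕ → Fin m} {i j i' j' n : ℕ}

theorem IsAltOn.mono (h : IsAltOn x i j) (hi : i ≤ i') (hj : j' ≤ j) : IsAltOn x i' j' :=
  ⟨fun k hk ↦ h.1 k (Ico_subset_Ico hi hj hk),
    fun k hk ↦ h.2 k (Ico_subset_Ico hi (Nat.sub_le_sub_right hj 1) hk)⟩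

theorem IsAltOn.union (h : IsAltOn x i j) (h' : IsAltOn x i' j') (hij : i' < j) :
    IsAltOn x i j' := by
  simp only [IsAltOn, mem_Ico] at *
  refine ⟨fun k hk ↦ ?_, fun k hk ↦ ?_⟩
  · by_cases hkj : k < j
    · exact h.1 k ⟨hk.1, hkj⟩
    · exact h'.1 k (by omega)
  · by_cases hkj : k < j - 1
    · exact h.2 k ⟨hk.1, hkj⟩
    · exact h'.2 k (by omega)

theorem isAltOn_succ_succ : IsAltOn x (i + 1) (j + 1) ↔ IsAltOn (fun k ↦ x (k + 1)) i j := by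
  simp only [IsAltOn, mem_Ico, Nat.add_sub_cancel]
  constructor <;> rintro ⟨hne, hperiod⟩
  · exact ⟨fun k hk ↦ hne (k + 1) (by omega), fun k hk ↦ hperiod (k + 1) (by omega)⟩
  · constructor <;> rintro (_ | k) hk
    · omega
    · exact hne k (by omega)
    · omega
    · exact hperiod k (by omega)

theorem isAltOn_zero_one : IsAltOn x 0 1 ↔ x 0 ≠ x 1 := by
  simp [IsAltOn]

theorem isAltOn_zero_add_two :
    IsAltOn x 0 (j + 2) ↔ x 0 ≠ x 1 ∧ x 0 = x 2 ∧ IsAltOn (fun k ↦ x (k + 1)) 0 (j + 1) := by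
  rw [← isAltOn_succ_succ]
  constructor
  · intro h
    exact ⟨h.1 0 (by simp), h.2 0 (by simp), h.mono (by omega) le_rfl⟩
  · rintro ⟨hne, hperiod, h⟩
    constructor <;> rintro (_ | k) hk
    · exact hne
    · exact h.1 (k + 1) (by simpa using hk)
    · exact hperiod
    · exact h.2 (k + 1) (by simpa using hk)

theorem altPrefixLength_le_length {α : Type*} [DecidableEq α] (a c : α) (u : List α) :
    altPrefixLength a c u ≤ u.length := by
  induction u generalizing a c with
  | nil => exact le_rfl
  | cons d u ih =>
    rw [altPrefixLength]
    split_ifs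
    · exact Nat.succ_le_succ (ih c a)
    · exact Nat.zero_le _

theorem isAltOn_getD_iff {a c : Fin m} (z : Fin m) (hac : a ≠ c) {u : List (Fin m)} {k : ℕ}
    (hk : k ≤ u.length) :
    IsAltOn ((a :: c :: u).getD · z) 0 (k + 1) ↔ k ≤ altPrefixLength a c u := by
  induction k generalizing a c u with
  | zero => simpa [isAltOn_zero_one] using hac
  | succ k ih =>
    obtain ⟨d, u, rfl⟩ := List.exists_cons_of_length_pos (by omega : 0 < u.length)
    rw [isAltOn_zero_add_two, altPrefixLength]
    simp only [List.getD_cons_succ, List.getD_cons_zero]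
    by_cases hd : d = a
    · subst hd
      rw [ih hac.symm (by simpa using hk)]
      simp [hac]
    · simp [hd, Ne.symm hd]

/-- The occurrences `(i, j)` of alternating factors `x_i, …, x_j` of length at least three in
the word `x_0, …, x_{n-1}`. -/
def altWindows (n : ℕ) (x : ℕ → Fin m) : Finset (ℕ × ℕ) :=
  {p ∈ range n ×ˢ range n | p.1 + 2 ≤ p.2 ∧ IsAltOn x p.1 p.2}

theorem card_altWindows_succ (n : ℕ) (x : ℕ → Fin m) :
    #(altWindows (n + 1) x) =
      #(altWindows n fun k ↦ x (k + 1)) + #{j ∈ range (n + 1) | 2 ≤ j ∧ IsAltOn x 0 j} := by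
  have hshift (i : ℕ) : #{j ∈ range (n + 1) | i + 1 + 2 ≤ j ∧ IsAltOn x (i + 1) j} =
      #{j ∈ range n | i + 2 ≤ j ∧ IsAltOn (fun k ↦ x (k + 1)) i j} := by
    simp only [card_filter]
    rw [sum_range_succ']
    simp [isAltOn_succ_succ, add_right_comm i 1 2]
  simp only [altWindows, card_filter, sum_product] at hshift ⊢
  rw [sum_range_succ' _ n]
  simp only [hshift, zero_add]

theorem card_filter_isAltOn_zero (z a c : Fin m) (u : List (Fin m)) :
    #{j ∈ range (u.length + 2) | 2 ≤ j ∧ IsAltOn ((a :: c :: u).getD · z) 0 j} =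
      if a = c then 0 else altPrefixLength a c u := by
  split_ifs with h
  · rw [card_eq_zero, filter_eq_empty_iff]
    rintro j - ⟨hj, halt⟩
    exact isAltOn_zero_one.1 (halt.mono le_rfl (by omega)) (by simpa using h)
  · have hIco : {j ∈ range (u.length + 2) | 2 ≤ j ∧ IsAltOn ((a :: c :: u).getD · z) 0 j} =
        Ico 2 (altPrefixLength a c u + 2) := by
      ext j
      have hle := altPrefixLength_le_length a c u
      simp only [mem_filter, mem_range, mem_Ico]
      rcases j with _ | k
      · simp
      constructor
      · rintro ⟨hk, h2, halt⟩
        have := (isAltOn_getD_iff z h (by omega)).1 halt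
        omega
      · intro hk
        exact ⟨by omega, hk.1, (isAltOn_getD_iff z h (by omega)).2 (by omega)⟩
    rw [hIco, Nat.card_Ico, Nat.add_sub_cancel]

theorem card_altWindows_getD (z : Fin m) (l : List (Fin m)) :
    #(altWindows l.length (l.getD · z)) = altFactorCount l := by
  induction l with
  | nil => rfl
  | cons a l ih =>
    rw [List.length_cons, card_altWindows_succ]
    simp only [List.getD_cons_succ, ih]
    rcases l with _ | ⟨c, u⟩
    · simp [altFactorCount]
    · rw [List.length_cons, card_filter_isAltOn_zero, altFactorCount]

theorem rho_getD (z : Fin m) {l : List (Fin m)} (hl : l ≠ []) :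
    rho l.length (l.getD · z) = (l.destutter (· ≠ ·)).length := by
  induction l with
  | nil => contradiction
  | cons a l ih =>
    rcases l with _ | ⟨c, u⟩
    · simp [rho]
    rw [length_destutter_cons_cons, ← ih (List.cons_ne_nil c u)]
    simp only [rho, card_filter, List.length_cons, Nat.add_sub_cancel]
    rw [sum_range_succ', ← add_assoc]
    simp only [List.getD_cons_succ, List.getD_cons_zero, ite_not, ne_eq]

/-- The subwindows of `p`, seen as the interval of indices from `p.1` to `p.2`, that contain
at least three indices. -/
def subwindows (p : ℕ × ℕ) : Finset (ℕ × ℕ) :=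
  {q ∈ Icc p.1 p.2 ×ˢ Icc p.1 p.2 | q.1 + 2 ≤ q.2}

theorem mem_subwindows {p q : ℕ × ℕ} :
    q ∈ subwindows p ↔ p.1 ≤ q.1 ∧ q.1 + 2 ≤ q.2 ∧ q.2 ≤ p.2 := by
  simp only [subwindows, mem_filter, mem_product, mem_Icc]
  omega

theorem card_subwindows (i k : ℕ) : #(subwindows (i, i + k)) = k.choose 2 := by
  have hfibres : #(subwindows (i, i + k)) = #((range k).sigma range) := by
    refine card_bij' (fun q _ ↦ ⟨q.2 - i - 1, q.1 - i⟩) (fun t _ ↦ (i + t.2, i + t.1 + 1))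
      ?_ ?_ ?_ ?_ <;> simp only [mem_subwindows, mem_sigma, mem_range] <;> grind
  rw [hfibres, card_sigma]
  simp only [card_range, sum_range_id, Nat.choose_two_right]

theorem mem_altSegs {p : ℕ × ℕ} :
    p ∈ altSegs n x ↔ p.1 ≤ p.2 ∧ p.2 < n ∧ IsAltOn x p.1 p.2 ∧
      (p.1 = 0 ∨ ¬ IsAltOn x (p.1 - 1) p.2) ∧ (p.2 = n - 1 ∨ ¬ IsAltOn x p.1 (p.2 + 1)) := by
  simp only [altSegs, mem_filter, mem_product, mem_range]
  grind

theorem exists_mem_altSegs (h : IsAltOn x i j) (hij : i ≤ j) (hj : j < n) :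
    ∃ p ∈ altSegs n x, p.1 ≤ i ∧ j ≤ p.2 := by
  have hleft : ∃ a, IsAltOn x a j := ⟨i, h⟩
  set a := Nat.find hleft
  have ha : IsAltOn x a j := Nat.find_spec hleft
  have hai : a ≤ i := Nat.find_min' hleft h
  set b := Nat.findGreatest (IsAltOn x a) (n - 1)
  have hb : IsAltOn x a b := Nat.findGreatest_spec (Nat.le_sub_one_of_lt hj) ha
  have hjb : j ≤ b := Nat.le_findGreatest (Nat.le_sub_one_of_lt hj) ha
  have hbn : b ≤ n - 1 := Nat.findGreatest_le _
  refine ⟨(a, b), mem_altSegs.2 ⟨by omega, by omega, hb, ?_, ?_⟩, hai, hjb⟩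
  · refine or_iff_not_imp_left.2 fun ha0 hext ↦ ?_
    exact Nat.find_min hleft (m := a - 1) (by omega) (hext.mono le_rfl hjb)
  · refine or_iff_not_imp_left.2 fun hbn' hext ↦ ?_
    exact Nat.findGreatest_is_greatest (lt_add_one b) (by omega) hext

theorem altWindows_eq_biUnion (n : ℕ) (x : ℕ → Fin m) :
    altWindows n x = (altSegs n x).biUnion subwindows := by
  ext ⟨i, j⟩
  simp only [altWindows, mem_filter, mem_product, mem_range, mem_biUnion, mem_subwindows]
  constructor
  · rintro ⟨⟨-, hj⟩, hij, h⟩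
    obtain ⟨p, hp, hpi, hjp⟩ := exists_mem_altSegs h (by omega) hj
    exact ⟨p, hp, hpi, hij, hjp⟩
  · rintro ⟨p, hp, hpi, hij, hjp⟩
    obtain ⟨-, hpn, halt, -⟩ := mem_altSegs.1 hp
    exact ⟨⟨by omega, by omega⟩, hij, halt.mono hpi hjp⟩

theorem altSegs_le_of_overlap {p q : ℕ × ℕ} (hp : p ∈ altSegs n x) (hq : q ∈ altSegs n x)
    (hpq : p.1 < q.2) (hqp : q.1 < p.2) : p.1 ≤ q.1 ∧ q.2 ≤ p.2 := by
  obtain ⟨-, -, hp_alt, hp_left, hp_right⟩ := mem_altSegs.1 hp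
  obtain ⟨-, hqn, hq_alt, -⟩ := mem_altSegs.1 hq
  constructor
  · by_contra! hlt
    have hext : IsAltOn x (p.1 - 1) p.2 := (hq_alt.union hp_alt hpq).mono (by omega) le_rfl
    exact hp_left.elim (by omega) (· hext)
  · by_contra! hlt
    have hext : IsAltOn x p.1 (p.2 + 1) := (hp_alt.union hq_alt hqp).mono le_rfl hlt
    exact hp_right.elim (by omega) (· hext)

theorem pairwiseDisjoint_subwindows (n : ℕ) (x : ℕ → Fin m) :
    (altSegs n x : Set (ℕ × ℕ)).PairwiseDisjoint subwindows := by
  intro p hp q hq hne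
  rw [Function.onFun, disjoint_left]
  intro w hwp hwq
  rw [mem_subwindows] at hwp hwq
  obtain ⟨hpq₁, hqp₂⟩ := altSegs_le_of_overlap hp hq (by omega) (by omega)
  obtain ⟨hqp₁, hpq₂⟩ := altSegs_le_of_overlap hq hp (by omega) (by omega)
  exact hne (Prod.ext (hpq₁.antisymm hqp₁) (hpq₂.antisymm hqp₂))

theorem card_altWindows (n : ℕ) (x : ℕ → Fin m) :
    (#(altWindows n x) : ℝ) = sumLenSq n x / 2 - 3 / 2 * sumLen n x + aCount n x := by
  rw [altWindows_eq_biUnion, card_biUnion (pairwiseDisjoint_subwindows n x), sumLenSq, sumLen,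
    aCount, card_eq_sum_ones]
  push_cast
  rw [sum_div, mul_sum, ← sum_sub_distrib, ← sum_add_distrib]
  refine sum_congr rfl fun ⟨i, j⟩ hij ↦ ?_
  obtain ⟨k, rfl⟩ : ∃ k, j = i + k := Nat.exists_eq_add_of_le (mem_altSegs.1 hij).1
  rw [card_subwindows, Nat.cast_choose_two, Nat.add_sub_cancel_left]
  ring

theorem image_ofFn_L1ball (hn : 1 ≤ n) (y : Fin n → Fin m) :
    List.ofFn '' L1ball n y = indelBall (List.ofFn y) := by
  ext w
  simp only [Set.mem_image, L1ball, Set.mem_ofPred_eq, mem_indelBall, deletionSphere,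
    insertionSphere, List.length_ofFn]
  constructor
  · rintro ⟨v, ⟨z, hz, hzy, hzv⟩, rfl⟩
    exact ⟨z, ⟨by omega, hzy⟩, by rw [List.length_ofFn]; omega, hzv⟩
  · rintro ⟨z, ⟨hz, hzy⟩, hw, hzw⟩
    obtain rfl : n = w.length := by omega
    exact ⟨w.get, ⟨z, by omega, hzy, by rwa [List.ofFn_get]⟩, List.ofFn_get w⟩

theorem L1size_eq_ncard_indelBall (hn : 1 ≤ n) (y : Fin n → Fin m) :
    L1size n y = (indelBall (List.ofFn y)).ncard := by
  rw [L1size, ← image_ofFn_L1ball hn, Set.ncard_image_of_injective _ List.ofFn_injective]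

theorem extWord_eq_getD_ofFn (hm : 0 < m) (y : Fin n → Fin m) :
    extWord n hm y = ((List.ofFn y).getD · ⟨0, hm⟩) := by
  ext i : 1
  by_cases h : i < n <;> simp [extWord, h]

end Alternating

/-- Sala–Dolecek formula: for every `x ∈ Z_m^n`,
`|L_1(x)| = ρ(x)(mn-n-1) + 2 - (1/2)∑ s_i² + (3/2)∑ s_i - a(x)`. -/
theorem stmt8 (n m : ℕ) (hn : 1 ≤ n) (hm : 2 ≤ m) (x : Fin n → Fin m) :
    (L1size n x : ℝ)
      = (rho n (extWord n (by omega) x) : ℝ) * ((m : ℝ) * n - n - 1) + 2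
          - (sumLenSq n (extWord n (by omega) x) : ℝ) / 2
          + 3 / 2 * (sumLen n (extWord n (by omega) x) : ℝ)
          - (aCount n (extWord n (by omega) x) : ℝ) := by
  have hm0 : 0 < m := by omega
  set l := List.ofFn x with hl
  have hlen : l.length = n := List.length_ofFn
  have hne : l ≠ [] := List.ne_nil_of_length_pos (by omega)
  have hsize : (L1size n x : ℤ) =
      rho n (extWord n hm0 x) * ((m - 1) * n - 1) + 2 - #(altWindows n (extWord n hm0 x)) := by
    rw [L1size_eq_ncard_indelBall hn, ncard_indelBall hne, extWord_eq_getD_ofFn, ← hl, ← hlen,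
      rho_getD _ hne, card_altWindows_getD, Nat.card_fin]
  have hwindows := card_altWindows n (extWord n hm0 x)
  rify at hsize
  linear_combination hsize - hwindows
end

section
/- For a uniformly random binary word x ∈ Z_2^n with n > 3 and any constant c > 0, Pr( |L_1(x)| - E[|L_1(x)|] ≥ c·n·√(n-1) ) ≤ exp(-2c^2), where E[|L_1(x)|] = n^2/2 - n/2 - 1/2^(n-1) + 3. -/
open Finset

/-!
Let `y ≠ x` lie in the ball, and let `i` and `j` be the first and last positions where they
differ. Between `i` and `j` the word `y` is `x` shifted by one place to the left or to the
right, so a binary `y` is determined by `(i, j)` and the direction. A left shift with `i < j`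
needs `x i ≠ x (i + 1)`, a right shift needs `x (j - 1) ≠ x j`, and the two shifts agree when
`x` alternates on `[i, j]`. Hence
`|L_1(x)| ≤ 1 + n + n · #{k | x k ≠ x (k + 1)} - #{i < j | x alternates on [i, j]}`.

For uniform `x` the indicators of `x k ≠ x (k + 1)` are `n - 1` fair coin flips, and the
right-hand side has mean `n²/2 - n/2 - 1/2^(n-1) + 3`. Flipping one coin can change it by far
more than `n`, but its conditional mean given the earlier coins changes by
`n - (r + 1)(2 - 2⁻ᵐ)` only, where `r` is the number of `true`s immediately before that coin
and `m` the number of coins after it. This lies in `[-n, n]`, so the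
Azuma–Hoeffding argument applies.
-/

open scoped BigOperators

section CoinFlips

variable {m : ℕ}

lemma expect_bool_fun_succ (F : (Fin (m + 1) → Bool) → ℝ) :
    𝔼 ω, F ω = ((𝔼 ω, F (Fin.cons true ω)) + 𝔼 ω, F (Fin.cons false ω)) / 2 := by
  have hcons : ∑ ω, F ω = ∑ b, ∑ ω, F (Fin.cons b ω) := by
    rw [← Fintype.sum_prod_type']
    exact ((Fin.consEquiv fun _ => Bool).sum_comp F).symm
  simp only [Fintype.expect_eq_sum_div_card, hcons, Fintype.sum_bool, Fintype.card_fun,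
    Fintype.card_bool, Fintype.card_fin, pow_succ]
  push_cast
  ring

/-- `F` is a function of `m` fair coin flips whose Doob martingale, exposing the flips one at a
time, has martingale differences of absolute value at most `D / 2`: whatever the flips exposed so
far, the two outcomes of the next one give conditional means at distance at most `D`. -/
def IsDoobLipschitz (D : ℝ) : {m : ℕ} → ((Fin m → Bool) → ℝ) → Prop
  | 0, _ => True
  | _ + 1, F => |(𝔼 ω, F (Fin.cons true ω)) - 𝔼 ω, F (Fin.cons false ω)| ≤ D ∧
      ∀ b, IsDoobLipschitz D fun ω => F (Fin.cons b ω)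

lemma IsDoobLipschitz.const_add {D : ℝ} {F : (Fin m → Bool) → ℝ} (hF : IsDoobLipschitz D F)
    (a : ℝ) : IsDoobLipschitz D fun ω => a + F ω := by
  induction m with
  | zero => trivial
  | succ m ih =>
    refine ⟨?_, fun b => ih (hF.2 b)⟩
    simpa only [expect_add_distrib, Fintype.expect_const, add_sub_add_left_eq_sub] using hF.1

lemma exp_half_add_exp_neg_half_le {d D : ℝ} (hd : |d| ≤ D) :
    (Real.exp (d / 2) + Real.exp (-(d / 2))) / 2 ≤ Real.exp (D ^ 2 / 8) := by
  have hsq : d ^ 2 ≤ D ^ 2 := sq_le_sq' (neg_le_of_abs_le hd) (le_of_abs_le hd)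
  calc (Real.exp (d / 2) + Real.exp (-(d / 2))) / 2 = Real.cosh (d / 2) := (Real.cosh_eq _).symm
    _ ≤ Real.exp ((d / 2) ^ 2 / 2) := Real.cosh_le_exp_half_sq _
    _ ≤ Real.exp (D ^ 2 / 8) := Real.exp_le_exp.2 (by linarith [div_pow d 2 2])

theorem IsDoobLipschitz.expect_exp_le {D : ℝ} {F : (Fin m → Bool) → ℝ}
    (hF : IsDoobLipschitz D F) (l : ℝ) :
    𝔼 ω, Real.exp (l * (F ω - 𝔼 η, F η)) ≤ Real.exp (m * ((l * D) ^ 2 / 8)) := by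
  induction m with
  | zero => simp
  | succ m ih =>
    obtain ⟨hdiff, hbranch⟩ := hF
    let μ : Bool → ℝ := fun b => 𝔼 ω, F (Fin.cons b ω)
    let M : ℝ := Real.exp (m * ((l * D) ^ 2 / 8))
    have hmean : 𝔼 ω, F ω = (μ true + μ false) / 2 := expect_bool_fun_succ F
    have hcond (b : Bool) : 𝔼 ω, Real.exp (l * (F (Fin.cons b ω) - 𝔼 η, F η)) ≤
        Real.exp (l * (μ b - 𝔼 η, F η)) * M := by
      calc 𝔼 ω, Real.exp (l * (F (Fin.cons b ω) - 𝔼 η, F η))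
          = Real.exp (l * (μ b - 𝔼 η, F η)) * 𝔼 ω, Real.exp (l * (F (Fin.cons b ω) - μ b)) := by
            rw [mul_expect]
            refine expect_congr rfl fun ω _ => ?_
            rw [← Real.exp_add]
            ring_nf
        _ ≤ _ := mul_le_mul_of_nonneg_left (ih (hbranch b)) (Real.exp_nonneg _)
    have hstep : |l * (μ true - μ false)| ≤ |l| * D := by
      rw [abs_mul]
      gcongr
    have htrue : l * (μ true - 𝔼 η, F η) = l * (μ true - μ false) / 2 := by rw [hmean]; ring
    have hfalse : l * (μ false - 𝔼 η, F η) = -(l * (μ true - μ false) / 2) := by rw [hmean]; ring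
    calc 𝔼 ω, Real.exp (l * (F ω - 𝔼 η, F η))
        ≤ (Real.exp (l * (μ true - 𝔼 η, F η)) * M +
            Real.exp (l * (μ false - 𝔼 η, F η)) * M) / 2 := by
          rw [expect_bool_fun_succ]
          gcongr
          exacts [hcond true, hcond false]
      _ = (Real.exp (l * (μ true - μ false) / 2) + Real.exp (-(l * (μ true - μ false) / 2))) / 2
            * M := by rw [htrue, hfalse]; ring
      _ ≤ Real.exp ((|l| * D) ^ 2 / 8) * M := by
          gcongr
          exact exp_half_add_exp_neg_half_le hstep
      _ = Real.exp ((m + 1 : ℕ) * ((l * D) ^ 2 / 8)) := by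
          rw [← Real.exp_add, mul_pow, sq_abs]
          push_cast
          ring_nf

lemma card_filter_le_div_card_le_exp_mul_expect {Ω : Type*} [Fintype Ω] (X : Ω → ℝ) {l : ℝ}
    (hl : 0 ≤ l) (t : ℝ) :
    (#{ω | t ≤ X ω} : ℝ) / Fintype.card Ω ≤ Real.exp (-(l * t)) * 𝔼 ω, Real.exp (l * X ω) := by
  have hMarkov : (#{ω | t ≤ X ω} : ℝ) * Real.exp (l * t) ≤ ∑ ω, Real.exp (l * X ω) := by
    rw [← nsmul_eq_mul]
    refine (card_nsmul_le_sum _ (fun ω => Real.exp (l * X ω)) _ fun ω hω => ?_).trans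
      (sum_le_univ_sum_of_nonneg fun ω => (Real.exp_pos _).le)
    exact Real.exp_le_exp.2 (mul_le_mul_of_nonneg_left (mem_filter.1 hω).2 hl)
  rw [Fintype.expect_eq_sum_div_card, ← mul_div_assoc]
  gcongr
  rwa [Real.exp_neg, inv_mul_eq_div, le_div_iff₀ (Real.exp_pos _)]

theorem IsDoobLipschitz.card_filter_div_le {D : ℝ} {F : (Fin m → Bool) → ℝ}
    (hF : IsDoobLipschitz D F) {t : ℝ} (ht : 0 ≤ t) :
    (#{ω | t ≤ F ω - 𝔼 η, F η} : ℝ) / 2 ^ m ≤ Real.exp (-2 * t ^ 2 / (m * D ^ 2)) := by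
  have hbound (l : ℝ) (hl : 0 ≤ l) : (#{ω | t ≤ F ω - 𝔼 η, F η} : ℝ) / 2 ^ m ≤
      Real.exp (-(l * t) + m * ((l * D) ^ 2 / 8)) := by
    rw [Real.exp_add]
    refine le_trans ?_ (mul_le_mul_of_nonneg_left (hF.expect_exp_le l) (Real.exp_nonneg _))
    simpa using card_filter_le_div_card_le_exp_mul_expect (fun ω => F ω - 𝔼 η, F η) hl t
  refine (hbound (4 * t / (m * D ^ 2)) (by positivity)).trans (Real.exp_le_exp.2 (le_of_eq ?_))
  rcases eq_or_ne ((m : ℝ) * D ^ 2) 0 with h0 | h0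
  · simp [h0]
  · have hm := left_ne_zero_of_mul h0
    have hD : D ≠ 0 := by simpa using right_ne_zero_of_mul h0
    field_simp
    ring

end CoinFlips

section TrueIntervals

variable {m : ℕ}

/-- The number of leading `true`s of a bit string. -/
def leadingTrue (ω : Fin m → Bool) : ℕ := #{k | ∀ i ≤ k, ω i}

/-- The nonempty intervals of positions, given by their inclusive endpoints, on which a bit string
is constantly `true`. -/
def trueIntervals (ω : Fin m → Bool) : Finset (Fin m × Fin m) :=
  {p | p.1 ≤ p.2 ∧ ∀ k ∈ Icc p.1 p.2, ω k}

lemma mem_trueIntervals {ω : Fin m → Bool} {i j : Fin m} :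
    (i, j) ∈ trueIntervals ω ↔ i ≤ j ∧ ∀ k, i ≤ k ∧ k ≤ j → ω k := by
  simp only [trueIntervals, mem_filter_univ, mem_Icc]

/-- The statistic `n · #{true bits} - #{all-true intervals}` of a bit string preceded by `r` further
`true`s, where the prefix itself is not charged: `r · leadingTrue ω` counts the all-true intervals
that start in the prefix and end in `ω`. It is closed under exposing the first bit. -/
def intervalScore (n r : ℝ) (ω : Fin m → Bool) : ℝ :=
  n * #{k | ω k} - #(trueIntervals ω) - r * leadingTrue ω

lemma card_filter_true_cons (b : Bool) (ω : Fin m → Bool) :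
    #{k | (Fin.cons b ω : Fin (m + 1) → Bool) k} = b.toNat + #{k | ω k} := by
  rw [Fin.card_filter_univ_succ']
  cases b <;> simp

lemma leadingTrue_cons_true (ω : Fin m → Bool) :
    leadingTrue (Fin.cons true ω : Fin (m + 1) → Bool) = 1 + leadingTrue ω := by
  simp [leadingTrue, Fin.card_filter_univ_succ', Fin.forall_fin_succ]

lemma leadingTrue_cons_false (ω : Fin m → Bool) :
    leadingTrue (Fin.cons false ω : Fin (m + 1) → Bool) = 0 := by
  simp [leadingTrue, Fin.forall_fin_succ]

lemma card_trueIntervals_cons (b : Bool) (ω : Fin m → Bool) :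
    #(trueIntervals (Fin.cons b ω : Fin (m + 1) → Bool)) =
      leadingTrue (Fin.cons b ω : Fin (m + 1) → Bool) + #(trueIntervals ω) := by
  simp only [leadingTrue, trueIntervals, card_filter, Fintype.sum_prod_type]
  rw [Fin.sum_univ_succ]
  simp [Fin.forall_fin_succ, Fin.card_filter_univ_succ']

lemma intervalScore_cons_true (n r : ℝ) (ω : Fin m → Bool) :
    intervalScore n r (Fin.cons true ω : Fin (m + 1) → Bool) =
      n - (r + 1) + intervalScore n (r + 1) ω := by
  simp only [intervalScore, card_filter_true_cons, card_trueIntervals_cons, leadingTrue_cons_true,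
    Bool.toNat_true]
  push_cast
  ring

lemma intervalScore_cons_false (n r : ℝ) (ω : Fin m → Bool) :
    intervalScore n r (Fin.cons false ω : Fin (m + 1) → Bool) = intervalScore n 0 ω := by
  simp [intervalScore, card_filter_true_cons, card_trueIntervals_cons, leadingTrue_cons_false]

lemma expect_intervalScore_cons_true (n r : ℝ) :
    𝔼 ω : Fin m → Bool, intervalScore n r (Fin.cons true ω : Fin (m + 1) → Bool) =
      n - (r + 1) + 𝔼 ω : Fin m → Bool, intervalScore n (r + 1) ω := by
  simp only [intervalScore_cons_true, expect_add_distrib, Fintype.expect_const]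

theorem expect_intervalScore (m : ℕ) (n r : ℝ) :
    𝔼 ω : Fin m → Bool, intervalScore n r ω =
      m * (n - 2) / 2 + (1 - r) * (1 - (1 / 2) ^ m) := by
  induction m generalizing r with
  | zero => simp [intervalScore, trueIntervals, leadingTrue]
  | succ m ih =>
    rw [expect_bool_fun_succ, expect_intervalScore_cons_true]
    simp only [intervalScore_cons_false, ih]
    push_cast
    ring

theorem isDoobLipschitz_intervalScore {n r : ℝ} (hr : 0 ≤ r) (hn : r + m ≤ n) :
    IsDoobLipschitz n (intervalScore n r : (Fin m → Bool) → ℝ) := by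
  induction m generalizing r with
  | zero => trivial
  | succ m ih =>
    push_cast at hn
    have hrn : r + 1 ≤ n := by linarith [m.cast_nonneg (α := ℝ)]
    refine ⟨?_, Bool.rec ?_ ?_⟩
    · have hdiff : (n - (r + 1) + 𝔼 ω : Fin m → Bool, intervalScore n (r + 1) ω) -
          𝔼 ω : Fin m → Bool, intervalScore n 0 ω = n - (r + 1) * (2 - (1 / 2) ^ m) := by
        rw [expect_intervalScore, expect_intervalScore]
        ring
      have hlower : 0 ≤ (r + 1) * (1 / 2) ^ m := by positivity
      have hpow_le : ((1 : ℝ) / 2) ^ m ≤ 1 := pow_le_one₀ (by norm_num) (by norm_num)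
      have hupper : 0 ≤ (r + 1) * (2 - (1 / 2) ^ m) :=
        mul_nonneg (by linarith) (by linarith)
      simp only [expect_intervalScore_cons_true, intervalScore_cons_false, hdiff]
      exact abs_le.2 ⟨by linarith [hlower, hrn], by linarith [hupper]⟩
    · simpa only [intervalScore_cons_false] using ih le_rfl (by linarith)
    · simpa only [intervalScore_cons_true] using
        (ih (r := r + 1) (by linarith) (by linarith)).const_add (n - (r + 1))

lemma card_filter_le_fst_add_card_filter_le_snd (ω : Fin m → Bool) :
    #{p : Fin m × Fin m | p.1 ≤ p.2 ∧ ω p.1} + #{p : Fin m × Fin m | p.1 ≤ p.2 ∧ ω p.2} =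
      (m + 1) * #{k | ω k} := by
  have hfst : #{p : Fin m × Fin m | p.1 ≤ p.2 ∧ ω p.1} = ∑ k with ω k, #(Ici k) := by
    simp only [sum_filter, ← filter_le_eq_Ici, card_filter, Fintype.sum_prod_type, and_comm,
      ite_and, sum_ite_irrel, sum_const_zero]
  have hsnd : #{p : Fin m × Fin m | p.1 ≤ p.2 ∧ ω p.2} = ∑ k with ω k, #(Iic k) := by
    simp only [sum_filter, ← filter_ge_eq_Iic, card_filter, Fintype.sum_prod_type_right, and_comm,
      ite_and, sum_ite_irrel, sum_const_zero]
  rw [hfst, hsnd, ← sum_add_distrib, mul_comm, ← smul_eq_mul]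
  refine sum_eq_card_nsmul fun k _ => ?_
  rw [Fin.card_Ici, Fin.card_Iic]
  omega

end TrueIntervals

section Deletion

variable {α : Type*} {N : ℕ}

lemma exists_eq_ofFn_removeNth_of_sublist {z : List α} {x : Fin (N + 1) → α}
    (hz : z.Sublist (List.ofFn x)) (hlen : z.length = N) :
    ∃ a : Fin (N + 1), z = List.ofFn (a.removeNth x) := by
  induction N generalizing z with
  | zero => exact ⟨0, by simp [List.length_eq_zero_iff.1 hlen]⟩
  | succ N ih =>
    rw [List.ofFn_succ] at hz
    cases hz with
    | cons _ h => exact ⟨0, h.eq_of_length (by simpa using hlen)⟩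
    | cons_cons _ h =>
      obtain ⟨a, rfl⟩ := ih h (by simpa using hlen)
      exact ⟨a.succ, by simp [List.ofFn_succ, Fin.removeNth_apply]; rfl⟩

lemma removeNth_eq_removeNth_iff {a b : Fin (N + 1)} (hab : a ≤ b) {x y : Fin (N + 1) → α} :
    a.removeNth x = b.removeNth y ↔ (∀ k < a, x k = y k) ∧ (∀ k > b, x k = y k) ∧
      ∀ k : Fin N, a ≤ k.castSucc → k.castSucc < b → x k.succ = y k.castSucc := by
  simp only [funext_iff, Fin.removeNth_apply]
  constructor
  · intro h
    refine ⟨fun k hk => ?_, fun k hk => ?_, fun k hak hkb => ?_⟩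
    · obtain ⟨i, rfl⟩ := Fin.eq_castSucc_of_ne_last (hk.trans_le (Fin.le_last a)).ne
      simpa [Fin.succAbove_of_castSucc_lt, hk, hk.trans_le hab] using h i
    · obtain ⟨i, rfl⟩ := Fin.eq_succ_of_ne_zero ((Fin.zero_le b).trans_lt hk).ne'
      have hbi : b ≤ i.castSucc := Fin.le_castSucc_iff.2 hk
      simpa [Fin.succAbove_of_le_castSucc, hbi, hab.trans hbi] using h i
    · simpa [Fin.succAbove_of_le_castSucc _ _ hak, Fin.succAbove_of_castSucc_lt _ _ hkb] using h k
  · rintro ⟨hlt, hgt, hmid⟩ k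
    rcases lt_or_ge k.castSucc a with hka | hak
    · rw [Fin.succAbove_of_castSucc_lt _ _ hka,
        Fin.succAbove_of_castSucc_lt _ _ (hka.trans_le hab), hlt _ hka]
    · rw [Fin.succAbove_of_le_castSucc _ _ hak]
      rcases lt_or_ge k.castSucc b with hkb | hbk
      · rw [Fin.succAbove_of_castSucc_lt _ _ hkb, hmid k hak hkb]
      · rw [Fin.succAbove_of_le_castSucc _ _ hbk, hgt _ (Fin.le_castSucc_iff.1 hbk)]

lemma exists_removeNth_eq_and_ne {a b : Fin (N + 1)} {x y : Fin (N + 1) → α}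
    (h : a.removeNth x = b.removeNth y) (hxy : x ≠ y) :
    ∃ i j : Fin (N + 1), i.removeNth x = j.removeNth y ∧ x i ≠ y i ∧ x j ≠ y j := by
  classical
  wlog hab : a ≤ b generalizing a b x y
  · obtain ⟨i, j, hij, hi, hj⟩ := this h.symm hxy.symm (le_of_not_ge hab)
    exact ⟨j, i, hij.symm, hj.symm, hi.symm⟩
  obtain ⟨hlt, hgt, hmid⟩ := (removeNth_eq_removeNth_iff hab).1 h
  let S : Finset (Fin (N + 1)) := {k | x k ≠ y k}
  have hS : S.Nonempty := by simpa [S, Finset.Nonempty, Function.ne_iff] using hxy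
  have hmin : x (S.min' hS) ≠ y (S.min' hS) := (mem_filter.1 (S.min'_mem hS)).2
  have hmax : x (S.max' hS) ≠ y (S.max' hS) := (mem_filter.1 (S.max'_mem hS)).2
  have ha : a ≤ S.min' hS := not_lt.1 fun hk => hmin (hlt _ hk)
  have hb : S.max' hS ≤ b := not_lt.1 fun hk => hmax (hgt _ hk)
  refine ⟨S.min' hS, S.max' hS, (removeNth_eq_removeNth_iff (S.min'_le_max' hS)).2
    ⟨fun k hk => ?_, fun k hk => ?_,
      fun k hik hkj => hmid k (ha.trans hik) (hkj.trans_le hb)⟩, hmin, hmax⟩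
  · by_contra hne
    exact hk.not_ge (S.min'_le k (by simpa [S] using hne))
  · by_contra hne
    exact hk.not_ge (S.le_max' k (by simpa [S] using hne))

end Deletion

section BinaryBall

variable {N : ℕ}

/-- The bit string of a word recording at which positions consecutive letters differ. -/
def changes {α : Type*} [DecidableEq α] (x : Fin (N + 1) → α) : Fin N → Bool :=
  fun k => x k.castSucc ≠ x k.succ

/-- The binary word obtained from `x` by deleting its letter at position `a` and inserting a letter
that ends up at position `b` and differs from the letter `x b` previously there. -/
def deleteInsert (x : Fin (N + 1) → Fin 2) (a b : Fin (N + 1)) : Fin (N + 1) → Fin 2 :=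
  b.insertNth (x b + 1) (a.removeNth x)

lemma changes_eq_true_iff {α : Type*} [DecidableEq α] {x : Fin (N + 1) → α} {k : Fin N} :
    changes x k = true ↔ x k.castSucc ≠ x k.succ :=
  decide_eq_true_iff

lemma eq_of_ne_of_ne {p q r : Fin 2} (hp : p ≠ q) (hr : r ≠ q) : p = r := by
  omega

lemma eq_deleteInsert {x y : Fin (N + 1) → Fin 2} {a b : Fin (N + 1)}
    (h : a.removeNth x = b.removeNth y) (hb : x b ≠ y b) : y = deleteInsert x a b := by
  have hyb : x b + 1 = y b := eq_of_ne_of_ne (by simp) hb.symm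
  rw [deleteInsert, hyb, h, Fin.insertNth_self_removeNth]

lemma removeNth_swap_of_mem_trueIntervals {x y : Fin (N + 1) → Fin 2} {i j : Fin N}
    (hij : (i, j) ∈ trueIntervals (changes x))
    (h : j.succ.removeNth x = i.castSucc.removeNth y) (hi : x i.castSucc ≠ y i.castSucc) :
    i.castSucc.removeNth x = j.succ.removeNth y := by
  obtain ⟨hle, halt⟩ := mem_trueIntervals.1 hij
  have hlt : i.castSucc ≤ j.succ := (Fin.castSucc_lt_succ_iff.2 hle).le
  obtain ⟨hbefore, hafter, hshift⟩ := (removeNth_eq_removeNth_iff hlt).1 h.symm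
  refine (removeNth_eq_removeNth_iff hlt).2 ⟨fun k hk => (hbefore k hk).symm,
    fun k hk => (hafter k hk).symm, fun k hik hkj => ?_⟩
  have hflip : x k.castSucc ≠ y k.castSucc := by
    rcases hik.eq_or_lt with hik | hik
    · exact hik ▸ hi
    · obtain ⟨l, hl⟩ := Fin.eq_succ_of_ne_zero (Fin.ne_zero_of_lt hik)
      have hil : i.castSucc ≤ l.castSucc := Fin.le_castSucc_iff.2 (hl ▸ hik)
      have hlj : l.castSucc < j.succ := (Fin.castSucc_lt_succ.trans_eq hl.symm).trans hkj
      rw [hl, hshift l hil hlj]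
      exact (changes_eq_true_iff.1 (halt l ⟨hil, Fin.castSucc_lt_succ_iff.1 hlj⟩)).symm
  exact eq_of_ne_of_ne
    (changes_eq_true_iff.1 (halt k ⟨hik, Fin.castSucc_lt_succ_iff.1 hkj⟩)).symm hflip.symm

lemma exists_castSucc_succ_of_lt {a b : Fin (N + 1)} (hab : a < b) :
    ∃ i j : Fin N, i ≤ j ∧ a = i.castSucc ∧ b = j.succ := by
  obtain ⟨i, rfl⟩ := Fin.eq_castSucc_of_ne_last (Fin.ne_last_of_lt hab)
  obtain ⟨j, rfl⟩ := Fin.eq_succ_of_ne_zero (Fin.ne_zero_of_lt hab)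
  exact ⟨i, j, Fin.castSucc_lt_succ_iff.1 hab, rfl, rfl⟩

lemma exists_removeNth_eq_of_mem_L1ball {m : ℕ} {x y : Fin (N + 1) → Fin m}
    (hy : y ∈ L1ball (N + 1) x) : ∃ a b : Fin (N + 1), a.removeNth x = b.removeNth y := by
  obtain ⟨z, hlen, hzx, hzy⟩ := hy
  obtain ⟨a, rfl⟩ := exists_eq_ofFn_removeNth_of_sublist hzx hlen
  obtain ⟨b, hb⟩ := exists_eq_ofFn_removeNth_of_sublist hzy hlen
  exact ⟨a, b, List.ofFn_injective hb⟩

theorem eq_or_eq_deleteInsert_of_mem_L1ball {x y : Fin (N + 1) → Fin 2}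
    (hy : y ∈ L1ball (N + 1) x) :
    y = x ∨ (∃ a, y = deleteInsert x a a) ∨
      (∃ i j, i ≤ j ∧ changes x i ∧ y = deleteInsert x i.castSucc j.succ) ∨
      ∃ i j, i ≤ j ∧ changes x j ∧ (i, j) ∉ trueIntervals (changes x) ∧
        y = deleteInsert x j.succ i.castSucc := by
  rcases eq_or_ne x y with rfl | hxy
  · exact .inl rfl
  obtain ⟨a', b', hab'⟩ := exists_removeNth_eq_of_mem_L1ball hy
  obtain ⟨a, b, hab, ha, hb⟩ := exists_removeNth_eq_and_ne hab' hxy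
  rcases lt_trichotomy a b with hlt | rfl | hgt
  · obtain ⟨i, j, hij, rfl, rfl⟩ := exists_castSucc_succ_of_lt hlt
    have hshift := ((removeNth_eq_removeNth_iff hlt.le).1 hab).2.2 i le_rfl hlt
    exact .inr (.inr (.inl ⟨i, j, hij, changes_eq_true_iff.2 (hshift ▸ ha),
      eq_deleteInsert hab hb⟩))
  · exact .inr (.inl ⟨a, eq_deleteInsert hab hb⟩)
  · obtain ⟨i, j, hij, rfl, rfl⟩ := exists_castSucc_succ_of_lt hgt
    by_cases halt : (i, j) ∈ trueIntervals (changes x)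
    · have hchange := (mem_trueIntervals.1 halt).2 i ⟨le_rfl, hij⟩
      exact .inr (.inr (.inl ⟨i, j, hij, hchange,
        eq_deleteInsert (removeNth_swap_of_mem_trueIntervals halt hab hb) ha⟩))
    · have hshift := ((removeNth_eq_removeNth_iff hgt.le).1 hab.symm).2.2 j
        (Fin.castSucc_le_castSucc_iff.2 hij) Fin.castSucc_lt_succ
      exact .inr (.inr (.inr ⟨i, j, hij, changes_eq_true_iff.2 (hshift ▸ ha.symm), halt,
        eq_deleteInsert hab hb⟩))

theorem L1size_add_card_trueIntervals_le (x : Fin (N + 1) → Fin 2) :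
    L1size (N + 1) x + #(trueIntervals (changes x)) ≤
      N + 2 + (N + 1) * #{k | changes x k} := by
  let R : Finset (Fin N × Fin N) := {p | p.1 ≤ p.2 ∧ changes x p.1}
  let L : Finset (Fin N × Fin N) := {p | p.1 ≤ p.2 ∧ changes x p.2}
  let I := trueIntervals (changes x)
  have hIL : I ⊆ L := fun p hp => by
    obtain ⟨hle, htrue⟩ := mem_trueIntervals.1 hp
    exact (mem_filter_univ p).2 ⟨hle, htrue p.2 ⟨hle, le_rfl⟩⟩
  let cover : Finset (Fin (N + 1) → Fin 2) :=
    {x} ∪ (univ.image (fun a => deleteInsert x a a) ∪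
      (R.image (fun p => deleteInsert x p.1.castSucc p.2.succ) ∪
        (L \ I).image (fun p => deleteInsert x p.2.succ p.1.castSucc)))
  have hcover : L1ball (N + 1) x ⊆ cover := by
    intro y hy
    simp only [cover, mem_coe, mem_union, mem_singleton, mem_image, mem_univ, true_and]
    rcases eq_or_eq_deleteInsert_of_mem_L1ball hy with
      h | ⟨a, h⟩ | ⟨i, j, hij, hi, h⟩ | ⟨i, j, hij, hj, halt, h⟩
    · exact .inl h
    · exact .inr (.inl ⟨a, h.symm⟩)
    · exact .inr (.inr (.inl ⟨(i, j), (mem_filter_univ _).2 ⟨hij, hi⟩, h.symm⟩))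
    · exact .inr (.inr (.inr ⟨(i, j), mem_sdiff.2 ⟨(mem_filter_univ _).2 ⟨hij, hj⟩, halt⟩, h.symm⟩))
  have hcard : #cover ≤ 1 + (N + 1 + (#R + #(L \ I))) := by
    refine (card_union_le _ _).trans (add_le_add (card_singleton x).le ?_)
    refine (card_union_le _ _).trans (add_le_add (card_image_le.trans (card_fin _).le) ?_)
    exact (card_union_le _ _).trans (add_le_add card_image_le card_image_le)
  have hsize : L1size (N + 1) x ≤ #cover := by
    rw [← Set.ncard_coe_finset]
    exact Set.ncard_le_ncard hcover (finite_toSet _)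
  have hcount : #R + #L = (N + 1) * #{k | changes x k} :=
    card_filter_le_fst_add_card_filter_le_snd (changes x)
  have hsdiff : #(L \ I) + #I = #L := card_sdiff_add_card_eq_card hIL
  lia

theorem L1size_le_intervalScore (x : Fin (N + 1) → Fin 2) :
    (L1size (N + 1) x : ℝ) ≤ N + 2 + intervalScore (N + 1) 0 (changes x) := by
  have hbound : (L1size (N + 1) x + #(trueIntervals (changes x)) : ℝ) ≤
      N + 2 + (N + 1) * #{k | changes x k} := by
    exact_mod_cast L1size_add_card_trueIntervals_le x
  simp only [intervalScore, zero_mul, sub_zero]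
  linarith

lemma bijective_apply_zero_changes :
    Function.Bijective fun x : Fin (N + 1) → Fin 2 => (x 0, changes x) := by
  refine (Fintype.bijective_iff_injective_and_card _).2 ⟨fun x y hxy => ?_, by simp [pow_succ']⟩
  obtain ⟨hzero, hchanges⟩ := Prod.mk.inj hxy
  funext k
  induction k using Fin.induction with
  | zero => exact hzero
  | succ k ih =>
    have hk : x k.castSucc ≠ x k.succ ↔ y k.castSucc ≠ y k.succ := by
      rw [← changes_eq_true_iff, ← changes_eq_true_iff, hchanges]
    rw [ih] at hk
    omega

lemma card_filter_changes (P : (Fin N → Bool) → Prop) [DecidablePred P] :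
    #{x : Fin (N + 1) → Fin 2 | P (changes x)} = 2 * #{ω | P ω} := by
  have hfiber : #{x : Fin (N + 1) → Fin 2 | P (changes x)} =
      #((univ : Finset (Fin 2)) ×ˢ ({ω | P ω} : Finset (Fin N → Bool))) :=
    card_equiv (Equiv.ofBijective _ bijective_apply_zero_changes) fun x => by simp
  rw [hfiber, card_product, card_fin]

theorem card_filter_L1size_sub_div_le (N : ℕ) {t : ℝ} (ht : 0 ≤ t) :
    (#{x : Fin (N + 1) → Fin 2 | t ≤ L1size (N + 1) x -
        (N + 2 + 𝔼 ω : Fin N → Bool, intervalScore (N + 1) 0 ω)} : ℝ) / 2 ^ (N + 1) ≤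
      Real.exp (-2 * t ^ 2 / (N * (N + 1) ^ 2)) := by
  have hlip : IsDoobLipschitz (N + 1 : ℝ) (intervalScore (N + 1) 0 : (Fin N → Bool) → ℝ) :=
    isDoobLipschitz_intervalScore le_rfl (by linarith)
  let P : (Fin N → Bool) → Prop := fun ω =>
    t ≤ intervalScore (N + 1) 0 ω - 𝔼 η : Fin N → Bool, intervalScore (N + 1) 0 η
  have hcard : #{x : Fin (N + 1) → Fin 2 | t ≤ L1size (N + 1) x -
      (N + 2 + 𝔼 ω : Fin N → Bool, intervalScore (N + 1) 0 ω)} ≤ 2 * #{ω | P ω} := by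
    rw [← card_filter_changes]
    refine card_le_card (monotone_filter_right _ fun x _ hx => ?_)
    have hsize := L1size_le_intervalScore x
    simp only [P]
    linarith
  calc _ ≤ (2 * #{ω | P ω} : ℝ) / 2 ^ (N + 1) := by gcongr; exact_mod_cast hcard
    _ = (#{ω | P ω} : ℝ) / 2 ^ N := by rw [pow_succ', mul_div_mul_left _ _ two_ne_zero]
    _ ≤ _ := hlip.card_filter_div_le ht

end BinaryBall

/-- Upper-tail concentration of `|L_1(x)|` for uniformly random binary `x ∈ Z_2^n`, `n > 3`:
`Pr(|L_1(x)| - E[|L_1(x)|] ≥ c·n·√(n-1)) ≤ exp(-2c²)`,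
where `E[|L_1(x)|] = n²/2 - n/2 - 1/2^(n-1) + 3`. -/
theorem stmt11 (n : ℕ) (hn : 3 < n) (c : ℝ) (hc : 0 < c) :
    (Set.ncard {x : Fin n → Fin 2 |
        (L1size n x : ℝ) - ((n : ℝ) ^ 2 / 2 - (n : ℝ) / 2 - 1 / 2 ^ (n - 1) + 3)
          ≥ c * n * Real.sqrt ((n : ℝ) - 1)} : ℝ) / 2 ^ n
      ≤ Real.exp (-2 * c ^ 2) := by
  obtain ⟨N, rfl⟩ : ∃ N, n = N + 1 := ⟨n - 1, by omega⟩
  have hN : (0 : ℝ) < N := by exact_mod_cast (by omega : 0 < N)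
  have hmean : N + 2 + 𝔼 ω : Fin N → Bool, intervalScore (N + 1) 0 ω =
      ((N + 1 : ℕ) : ℝ) ^ 2 / 2 - ((N + 1 : ℕ) : ℝ) / 2 - 1 / 2 ^ (N + 1 - 1) + 3 := by
    rw [expect_intervalScore, one_div_pow, Nat.add_sub_cancel]
    push_cast
    ring
  have hexponent : -2 * (c * (N + 1 : ℕ) * √((N + 1 : ℕ) - 1)) ^ 2 / (N * (N + 1) ^ 2) =
      -2 * c ^ 2 := by
    rw [Nat.cast_add_one, add_sub_cancel_right, mul_pow, Real.sq_sqrt hN.le]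
    field_simp
  have htail := card_filter_L1size_sub_div_le N
    (t := c * (N + 1 : ℕ) * √((N + 1 : ℕ) - 1)) (by positivity)
  rw [hmean, hexponent] at htail
  simpa only [← Set.ncard_coe_finset, coe_filter_univ] using htail
end

section
/- For a uniformly random binary word x ∈ Z_2^n with n > 3 and any constant c > 0, Pr( |L_1(x)| - E[|L_1(x)|] ≤ -c·n·√(n-1) ) ≤ exp(-2c^2). -/
open Finset

/-!
Reveal the letters of a random binary word from the last one to the first. When a letter is put in
front of a nonempty word `w`, the ball grows by at least the number `ρ` of runs of `w` if the letter
repeats the first letter of `w`, and by at least `ρ + |w| + 1 - h` otherwise, where `h` is the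
length of the first alternating segment of `w`. Indeed the new words start with the other letter and
continue with a single-letter deletion of the longer word or, in the second case, a single-letter
insertion into the tail of `w`, and at most `h + 1` words are of both kinds. These bounds depend
linearly on `ρ` and `h`, so the conditional means of `|L_1(x)|` can be solved for explicitly. Each
of the `n - 1` steps moves the conditional mean up or down by at most `n / 2`, and the
Azuma–Hoeffding argument applies.
-/

namespace FLL

open Real
open scoped BigOperators

section Counting

variable {α : Type*}

/-- The words obtained from `x` by deleting one letter. -/
def deletions (x : List α) : Set (List α) := {w | w.Sublist x ∧ w.length + 1 = x.length}

/-- The words obtained from `x` by inserting one letter. -/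
def insertions (x : List α) : Set (List α) := {y | x ∈ deletions y}

/-- The ball `L_1(x)` of `L1ball` on lists: one letter of `x` is deleted, then one is inserted.
The ball around the empty word is empty, since there is nothing to delete. -/
def fllBall (x : List α) : Set (List α) := {y | (deletions x ∩ deletions y).Nonempty}

theorem deletions_nil : deletions ([] : List α) = ∅ := by
  simp [deletions]

theorem deletions_cons (a : α) (x : List α) :
    deletions (a :: x) = insert x (List.cons a '' deletions x) := by
  ext w
  constructor
  · rintro ⟨hsub, hlen⟩
    cases hsub with
    | cons _ h => exact .inl (h.eq_of_length (by simpa using hlen))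
    | cons_cons _ h => exact .inr ⟨_, ⟨h, by simpa using hlen⟩, rfl⟩
  · rintro (rfl | ⟨v, ⟨hsub, hlen⟩, rfl⟩)
    · exact ⟨List.sublist_cons_self _ _, rfl⟩
    · exact ⟨hsub.cons_cons a, by simpa using hlen⟩

theorem self_mem_deletions_cons (a : α) (x : List α) : x ∈ deletions (a :: x) := by
  simp [deletions_cons]

theorem cons_mem_deletions_cons {a : α} {w x : List α} (h : w ∈ deletions x) :
    a :: w ∈ deletions (a :: x) := by
  simp [deletions_cons, h]

theorem cons_mem_fllBall_of_mem_deletions {x y : List α} (b : α) (h : y ∈ deletions x) :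
    b :: y ∈ fllBall x :=
  ⟨y, h, self_mem_deletions_cons b y⟩

theorem cons_mem_fllBall_cons_cons_of_mem_insertions {x y : List α} (a c : α)
    (h : y ∈ insertions x) : c :: y ∈ fllBall (a :: c :: x) :=
  ⟨c :: x, self_mem_deletions_cons a _, cons_mem_deletions_cons h⟩

theorem cons_mem_fllBall_cons {a : α} {x y : List α} (h : y ∈ fllBall x) :
    a :: y ∈ fllBall (a :: x) := by
  obtain ⟨z, hzx, hzy⟩ := h
  exact ⟨a :: z, cons_mem_deletions_cons hzx, cons_mem_deletions_cons hzy⟩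

theorem deletions_cons_inter_insertions_cons_self_subset (a : α) (w x : List α) :
    deletions (a :: w) ∩ insertions (a :: x) ⊆
      insert w (List.cons a '' (deletions w ∩ insertions x)) := by
  rintro y ⟨hdel, hins⟩
  rw [deletions_cons] at hdel
  obtain rfl | ⟨v, hv, rfl⟩ := hdel
  · exact .inl rfl
  · exact .inr ⟨v, ⟨hv, List.cons_sublist_cons.1 hins.1, by simpa using hins.2⟩, rfl⟩

theorem deletions_cons_inter_insertions_cons_subset_of_ne {a c : α} (hca : c ≠ a) (w x : List α) :
    deletions (a :: w) ∩ insertions (c :: x) ⊆ {w, a :: c :: x} := by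
  rintro y ⟨hdel, hins⟩
  rw [deletions_cons] at hdel
  obtain rfl | ⟨v, -, rfl⟩ := hdel
  · exact .inl rfl
  · rw [insertions, Set.mem_ofPred_eq, deletions_cons] at hins
    obtain rfl | ⟨_, -, h⟩ := hins
    · exact .inr rfl
    · exact absurd (List.cons.inj h).1.symm hca

theorem length_eq_of_mem_fllBall {x y : List α} (h : y ∈ fllBall x) : y.length = x.length := by
  obtain ⟨z, ⟨-, hzx⟩, -, hzy⟩ := h
  exact hzy.symm.trans hzx

theorem finite_deletions (x : List α) : (deletions x).Finite :=
  x.sublists.finite_toSet.subset fun _ hw ↦ List.mem_sublists.2 hw.1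

theorem finite_insertions [Finite α] (x : List α) : (insertions x).Finite :=
  (List.finite_length_eq α (x.length + 1)).subset fun _ hy ↦ hy.2.symm

theorem finite_fllBall [Finite α] (x : List α) : (fllBall x).Finite :=
  (List.finite_length_eq α x.length).subset fun _ ↦ length_eq_of_mem_fllBall

theorem length_add_two_le_ncard_insertions [Finite α] [Nontrivial α] :
    ∀ x : List α, x.length + 2 ≤ (insertions x).ncard
  | [] => by
    obtain ⟨a, b, hab⟩ := exists_pair_ne α
    have hsub : {[a], [b]} ⊆ insertions ([] : List α) := by
      rintro _ (rfl | rfl) <;> exact self_mem_deletions_cons _ _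
    simpa [Set.ncard_pair, hab] using Set.ncard_le_ncard hsub (finite_insertions _)
  | a :: x => by
    obtain ⟨b, hba⟩ := exists_ne a
    have hsub : insert (b :: a :: x) (List.cons a '' insertions x) ⊆ insertions (a :: x) := by
      rintro _ (rfl | ⟨y, hy, rfl⟩)
      · exact self_mem_deletions_cons _ _
      · exact cons_mem_deletions_cons hy
    have hnotMem : b :: a :: x ∉ List.cons a '' insertions x := by
      rintro ⟨y, -, hy⟩
      exact hba (List.cons.inj hy).1.symm
    calc (a :: x).length + 2 = x.length + 2 + 1 := by rw [List.length_cons, add_right_comm]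
      _ ≤ (insertions x).ncard + 1 := by gcongr; exact length_add_two_le_ncard_insertions x
      _ = (insert (b :: a :: x) (List.cons a '' insertions x)).ncard := by
        rw [Set.ncard_insert_of_notMem hnotMem ((finite_insertions x).image _),
          Set.ncard_image_of_injective _ List.cons_injective]
      _ ≤ _ := Set.ncard_le_ncard hsub (finite_insertions _)

theorem ncard_fllBall_add_ncard_le [Finite α] {a b : α} (hab : a ≠ b) {x : List α}
    {S : Set (List α)} (hS : ∀ y ∈ S, b :: y ∈ fllBall (a :: x)) :
    (fllBall x).ncard + S.ncard ≤ (fllBall (a :: x)).ncard := by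
  have hfin := finite_fllBall (a :: x)
  have hsub_a : List.cons a '' fllBall x ⊆ fllBall (a :: x) :=
    Set.image_subset_iff.2 fun _ ↦ cons_mem_fllBall_cons
  have hsub_b : List.cons b '' S ⊆ fllBall (a :: x) := Set.image_subset_iff.2 hS
  have hdisj : Disjoint (List.cons a '' fllBall x) (List.cons b '' S) := by
    rw [Set.disjoint_left]
    rintro _ ⟨y, -, rfl⟩ ⟨z, -, hz⟩
    exact hab (List.cons.inj hz).1.symm
  rw [← Set.ncard_image_of_injective (fllBall x) (List.cons_injective (a := a)),
    ← Set.ncard_image_of_injective S (List.cons_injective (a := b)),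
    ← Set.ncard_union_eq hdisj (hfin.subset hsub_a) (hfin.subset hsub_b)]
  exact Set.ncard_le_ncard (Set.union_subset hsub_a hsub_b) hfin

theorem two_le_ncard_fllBall_singleton [Finite α] [Nontrivial α] (a : α) :
    2 ≤ (fllBall [a]).ncard := by
  obtain ⟨b, hba⟩ := exists_ne a
  have hsub : {[a], [b]} ⊆ fllBall [a] := by
    rintro _ (rfl | rfl) <;>
      exact cons_mem_fllBall_of_mem_deletions _ (self_mem_deletions_cons a [])
  simpa [Set.ncard_pair, hba.symm] using Set.ncard_le_ncard hsub (finite_fllBall _)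

variable [DecidableEq α]

/-- The number `ρ(x)` of runs (maximal constant blocks) of `x`. -/
def numRuns (x : List α) : ℕ := (x.destutter (· ≠ ·)).length

theorem numRuns_cons_cons_of_eq {a b : α} (h : a = b) (x : List α) :
    numRuns (a :: b :: x) = numRuns (b :: x) := by
  simp [numRuns, List.destutter, h]

theorem numRuns_cons_cons_of_ne {a b : α} (h : a ≠ b) (x : List α) :
    numRuns (a :: b :: x) = numRuns (b :: x) + 1 := by
  simp [numRuns, List.destutter, h]

/-- The length of the longest prefix of a word without two equal adjacent letters. For a binary
word this is the length `h(x)` of its first maximal alternating segment. -/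
def altPrefixLength : List α → ℕ
  | [] => 0
  | [_] => 1
  | a :: b :: x => if a = b then 1 else altPrefixLength (b :: x) + 1

theorem altPrefixLength_cons_cons_of_eq {a b : α} (h : a = b) (x : List α) :
    altPrefixLength (a :: b :: x) = 1 := by
  simp [altPrefixLength, h]

theorem altPrefixLength_cons_cons_of_ne {a b : α} (h : a ≠ b) (x : List α) :
    altPrefixLength (a :: b :: x) = altPrefixLength (b :: x) + 1 := by
  simp [altPrefixLength, h]

theorem altPrefixLength_cons_pos (a : α) (x : List α) : 0 < altPrefixLength (a :: x) := by
  cases x with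
  | nil => simp [altPrefixLength]
  | cons b x => rw [altPrefixLength]; split_ifs <;> omega

theorem altPrefixLength_le_length : ∀ x : List α, altPrefixLength x ≤ x.length
  | [] => le_rfl
  | [_] => le_rfl
  | a :: b :: x => by
    have ih := altPrefixLength_le_length (b :: x)
    rw [altPrefixLength, List.length_cons]
    split_ifs <;> omega

theorem ncard_deletions : ∀ x : List α, (deletions x).ncard = numRuns x
  | [] => by simp [deletions_nil, numRuns]
  | [a] => by simp [deletions_cons, deletions_nil, numRuns]
  | a :: b :: x => by
    have ih := ncard_deletions (b :: x)
    have himage := Set.ncard_image_of_injective (deletions (b :: x)) (List.cons_injective (a := a))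
    rw [deletions_cons]
    by_cases hab : a = b
    · have hmem : b :: x ∈ List.cons a '' deletions (b :: x) :=
        ⟨x, self_mem_deletions_cons b x, by rw [hab]⟩
      rw [Set.insert_eq_of_mem hmem, himage, ih, numRuns_cons_cons_of_eq hab]
    · have hnotMem : b :: x ∉ List.cons a '' deletions (b :: x) := by
        rintro ⟨y, -, hy⟩
        exact hab (List.cons.inj hy).1
      rw [Set.ncard_insert_of_notMem hnotMem ((finite_deletions _).image _), himage, ih,
        numRuns_cons_cons_of_ne hab]

theorem ncard_deletions_inter_insertions_le {a b : α} (hab : a ≠ b) (x : List α) :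
    (deletions (a :: b :: x) ∩ insertions x).ncard ≤ altPrefixLength (a :: b :: x) := by
  induction x generalizing a b with
  | nil =>
    have hsub : deletions [a, b] ∩ insertions [] ⊆ {[b], [a]} := by
      simp [deletions_cons, deletions_nil, Set.inter_subset_left]
    calc _ ≤ ({[b], [a]} : Set (List α)).ncard := Set.ncard_le_ncard hsub
      _ ≤ 2 := Set.ncard_insert_le _ _ |>.trans (by simp)
      _ = altPrefixLength [a, b] := by simp [altPrefixLength, hab]
  | cons c x ih =>
    rw [altPrefixLength_cons_cons_of_ne hab]
    by_cases hca : c = a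
    · subst hca
      have hfin : (List.cons c '' (deletions (b :: c :: x) ∩ insertions x)).Finite :=
        ((finite_deletions _).inter_of_left _).image _
      calc _ ≤ _ := Set.ncard_le_ncard
            (deletions_cons_inter_insertions_cons_self_subset c (b :: c :: x) x) (hfin.insert _)
        _ ≤ _ := Set.ncard_insert_le _ _
        _ ≤ _ := by
          rw [Set.ncard_image_of_injective _ List.cons_injective]
          gcongr
          exact ih hab.symm
    · have hpos := altPrefixLength_cons_pos b (c :: x)
      calc _ ≤ _ := Set.ncard_le_ncard
            (deletions_cons_inter_insertions_cons_subset_of_ne hca (b :: c :: x) x)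
        _ ≤ 2 := Set.ncard_insert_le _ _ |>.trans (by simp)
        _ ≤ _ := by omega

section Growth

variable [Finite α] [Nontrivial α]

theorem ncard_fllBall_add_numRuns_le (a : α) (x : List α) :
    (fllBall x).ncard + numRuns (a :: x) ≤ (fllBall (a :: x)).ncard := by
  obtain ⟨b, hba⟩ := exists_ne a
  rw [← ncard_deletions]
  exact ncard_fllBall_add_ncard_le hba.symm fun _ ↦ cons_mem_fllBall_of_mem_deletions b

theorem ncard_fllBall_add_numRuns_add_length_le {a c : α} (hac : a ≠ c) (x : List α) :
    (fllBall (c :: x)).ncard + numRuns (a :: c :: x) + (x.length + 2) ≤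
      (fllBall (a :: c :: x)).ncard + altPrefixLength (a :: c :: x) := by
  have hball := ncard_fllBall_add_ncard_le (x := c :: x)
    (S := deletions (a :: c :: x) ∪ insertions x) hac (by
      rintro y (hdel | hins)
      · exact cons_mem_fllBall_of_mem_deletions c hdel
      · exact cons_mem_fllBall_cons_cons_of_mem_insertions a c hins)
  have hunion := Set.ncard_union_add_ncard_inter (deletions (a :: c :: x)) (insertions x)
    (finite_deletions _) (finite_insertions _)
  have hdel := ncard_deletions (a :: c :: x)
  have hins := length_add_two_le_ncard_insertions x
  have hinter := ncard_deletions_inter_insertions_le hac x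
  omega

end Growth

end Counting

theorem L1size_eq_ncard_fllBall {m n : ℕ} (hn : 0 < n) (x : Fin n → Fin m) :
    L1size n x = (fllBall (List.ofFn x)).ncard := by
  have himage : List.ofFn '' L1ball n x = fllBall (List.ofFn x) := by
    ext y
    constructor
    · rintro ⟨y, ⟨z, hz, hzx, hzy⟩, rfl⟩
      have hlen : z.length + 1 = n := by omega
      exact ⟨z, ⟨hzx, by simpa using hlen⟩, hzy, by simpa using hlen⟩
    · intro hy
      have hlen : y.length = n := by simpa using length_eq_of_mem_fllBall hy
      obtain ⟨z, ⟨hzx, -⟩, hzy, hz⟩ := hy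
      subst hlen
      exact ⟨y.get, ⟨z, by omega, hzx, by rwa [List.ofFn_get]⟩, List.ofFn_get y⟩
  rw [L1size, ← himage, Set.ncard_image_of_injective _ List.ofFn_injective]

section Martingale

/-- The mean of `|L_1(uw)|` over the uniformly random binary words `u` of length `r`, for a
nonempty binary word `w`, in closed form: this is the solution of the recursion that results from
reading the bounds for the growth of the ball as equations. -/
noncomputable def doobMean (r : ℕ) (w : List (Fin 2)) : ℝ :=
  (fllBall w).ncard + r * (numRuns w + (r + w.length) / 2 - 1)
    + (1 - (1 / 2) ^ r) * (2 - altPrefixLength w)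

/-- Half the difference between the lower bounds below for `doobMean r (a :: w)` when `a` differs
from the first letter of `w` and when it equals that letter. -/
noncomputable def doobHalfGap (r : ℕ) (w : List (Fin 2)) : ℝ :=
  (r + 1 + w.length - (2 - (1 / 2) ^ r) * altPrefixLength w) / 2

theorem doobMean_zero (w : List (Fin 2)) : doobMean 0 w = (fllBall w).ncard := by
  simp [doobMean]

theorem doobMean_sub_doobHalfGap_le (r : ℕ) (b : Fin 2) (x : List (Fin 2)) :
    doobMean (r + 1) (b :: x) - doobHalfGap r (b :: x) ≤ doobMean r (b :: b :: x) := by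
  have hgrowth := ncard_fllBall_add_numRuns_le b (b :: x)
  rw [numRuns_cons_cons_of_eq rfl] at hgrowth
  rify at hgrowth
  simp only [doobMean, doobHalfGap, numRuns_cons_cons_of_eq, altPrefixLength_cons_cons_of_eq,
    List.length_cons, pow_succ]
  push_cast
  linarith

theorem doobMean_add_doobHalfGap_le (r : ℕ) {a b : Fin 2} (hab : a ≠ b) (x : List (Fin 2)) :
    doobMean (r + 1) (b :: x) + doobHalfGap r (b :: x) ≤ doobMean r (a :: b :: x) := by
  have hgrowth := ncard_fllBall_add_numRuns_add_length_le hab x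
  rw [numRuns_cons_cons_of_ne hab, altPrefixLength_cons_cons_of_ne hab] at hgrowth
  rify at hgrowth
  simp only [doobMean, doobHalfGap, numRuns_cons_cons_of_ne hab,
    altPrefixLength_cons_cons_of_ne hab, List.length_cons, pow_succ]
  push_cast
  linarith

theorem abs_doobHalfGap_le (r : ℕ) (w : List (Fin 2)) :
    |doobHalfGap r w| ≤ (r + 1 + w.length) / 2 := by
  have hlen : (altPrefixLength w : ℝ) ≤ w.length := mod_cast altPrefixLength_le_length w
  have hpow : (0 : ℝ) ≤ (1 / 2) ^ r := by positivity
  have hpow_le : (1 / 2 : ℝ) ^ r ≤ 1 := pow_le_one₀ (by norm_num) (by norm_num)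
  have hnonneg : 0 ≤ (2 - (1 / 2 : ℝ) ^ r) * altPrefixLength w :=
    mul_nonneg (by linarith) (Nat.cast_nonneg _)
  have hle : (2 - (1 / 2 : ℝ) ^ r) * altPrefixLength w ≤ 2 * w.length := by
    gcongr
    linarith
  rw [doobHalfGap, abs_le]
  constructor <;> linarith [Nat.cast_nonneg (α := ℝ) r]

/-- The value of `E[|L_1(x)|]` for uniformly random `x ∈ Z_2^n`, `n ≥ 1`. -/
noncomputable def meanL1size (n : ℕ) : ℝ := (n : ℝ) ^ 2 / 2 - (n : ℝ) / 2 - 1 / 2 ^ (n - 1) + 3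

theorem meanL1size_succ_le_doobMean_singleton (r : ℕ) (b : Fin 2) :
    meanL1size (r + 1) ≤ doobMean r [b] := by
  have hball : (2 : ℝ) ≤ (fllBall [b]).ncard := mod_cast two_le_ncard_fllBall_singleton b
  simp only [meanL1size, doobMean, numRuns, altPrefixLength, List.destutter_singleton,
    List.length_singleton, Nat.add_sub_cancel, one_div, inv_pow]
  push_cast
  linarith

end Martingale

section Concentration

theorem exp_sub_add_exp_add_le (x s : ℝ) :
    exp (x - s) + exp (x + s) ≤ 2 * exp (x + s ^ 2 / 2) :=
  calc exp (x - s) + exp (x + s) = 2 * (exp x * cosh s) := by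
        rw [cosh_eq, sub_eq_add_neg, exp_add, exp_add]; ring
    _ ≤ 2 * (exp x * exp (s ^ 2 / 2)) := by gcongr; exact cosh_le_exp_half_sq s
    _ = 2 * exp (x + s ^ 2 / 2) := by rw [exp_add]

theorem expect_exp_neg_mul_doobMean_cons_le {l : ℝ} (hl : 0 ≤ l) (r : ℕ) {w : List (Fin 2)}
    (hw : w ≠ []) :
    𝔼 a, exp (-(l * doobMean r (a :: w))) ≤
      exp (-(l * doobMean (r + 1) w)) * exp (l ^ 2 * (r + 1 + w.length) ^ 2 / 8) := by
  obtain ⟨b, x, rfl⟩ := List.exists_cons_of_ne_nil hw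
  set w := b :: x
  obtain ⟨c, hcb, hsum⟩ : ∃ c ≠ b, ∀ f : Fin 2 → ℝ, ∑ a, f a = f c + f b := by
    refine ⟨b + 1, by simp, fun f ↦ ?_⟩
    fin_cases b <;> simp [Fin.sum_univ_two, add_comm]
  have hgap : doobHalfGap r w ^ 2 ≤ ((r + 1 + w.length) / 2) ^ 2 :=
    sq_le_sq.2 ((abs_doobHalfGap_le r w).trans (le_abs_self _))
  have hexponent : (l * doobHalfGap r w) ^ 2 / 2 ≤ l ^ 2 * (r + 1 + w.length) ^ 2 / 8 := by
    linarith [mul_le_mul_of_nonneg_left hgap (sq_nonneg l)]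
  rw [Fintype.expect_eq_sum_div_card, hsum, Fintype.card_fin, ← exp_add,
    div_le_iff₀' (by norm_num)]
  calc exp (-(l * doobMean r (c :: w))) + exp (-(l * doobMean r (b :: w)))
      ≤ exp (-(l * doobMean (r + 1) w) - l * doobHalfGap r w)
        + exp (-(l * doobMean (r + 1) w) + l * doobHalfGap r w) := by
        gcongr
        · linarith [mul_le_mul_of_nonneg_left (doobMean_add_doobHalfGap_le r hcb x) hl]
        · linarith [mul_le_mul_of_nonneg_left (doobMean_sub_doobHalfGap_le r b x) hl]
    _ ≤ 2 * exp (-(l * doobMean (r + 1) w) + (l * doobHalfGap r w) ^ 2 / 2) :=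
        exp_sub_add_exp_add_le _ _
    _ ≤ _ := by
        gcongr 2 * exp (_ + ?_)

theorem expect_fin_cons {β M : Type*} [Fintype β] [AddCommMonoid M] [Module ℚ≥0 M] {k : ℕ}
    (f : (Fin (k + 1) → β) → M) :
    𝔼 x, f x = 𝔼 w : Fin k → β, 𝔼 a, f (Fin.cons a w) := by
  rw [Finset.expect_comm, ← Finset.expect_product', Finset.univ_product_univ]
  exact (Fintype.expect_equiv (Fin.consEquiv fun _ ↦ β) _ _ fun _ ↦ rfl).symm

theorem expect_exp_neg_mul_doobMean_le {l : ℝ} (hl : 0 ≤ l) {k r n : ℕ} (hn : k + 1 + r = n) :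
    𝔼 w : Fin (k + 1) → Fin 2, exp (-(l * doobMean r (List.ofFn w))) ≤
      exp (-(l * meanL1size n)) * exp (l ^ 2 * n ^ 2 / 8) ^ k := by
  induction k generalizing r with
  | zero =>
    subst hn
    refine Finset.expect_le Finset.univ_nonempty fun w _ ↦ ?_
    have hmean := meanL1size_succ_le_doobMean_singleton r (w 0)
    simpa [add_comm] using mul_le_mul_of_nonneg_left hmean hl
  | succ k ih =>
    have hstep (w : Fin (k + 1) → Fin 2) :
        𝔼 a, exp (-(l * doobMean r (a :: List.ofFn w))) ≤
          exp (-(l * doobMean (r + 1) (List.ofFn w))) * exp (l ^ 2 * n ^ 2 / 8) := by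
      have hlen : (n : ℝ) = r + 1 + (List.ofFn w).length := by
        rw [← hn, List.length_ofFn]
        push_cast
        ring
      rw [hlen]
      exact expect_exp_neg_mul_doobMean_cons_le hl r (by simp)
    simp only [expect_fin_cons (k := k + 1), List.ofFn_cons]
    calc _ ≤ 𝔼 w : Fin (k + 1) → Fin 2,
          exp (-(l * doobMean (r + 1) (List.ofFn w))) * exp (l ^ 2 * n ^ 2 / 8) :=
        Finset.expect_le_expect fun w _ ↦ hstep w
      _ ≤ exp (-(l * meanL1size n)) * exp (l ^ 2 * n ^ 2 / 8) ^ k * exp (l ^ 2 * n ^ 2 / 8) := by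
        rw [← Finset.expect_mul]
        gcongr
        exact ih (by omega)
      _ = _ := by rw [pow_succ _ k, mul_assoc]

theorem expect_exp_neg_mul_L1size_sub_le {l : ℝ} (hl : 0 ≤ l) (k : ℕ) :
    𝔼 x : Fin (k + 1) → Fin 2, exp (-(l * (L1size (k + 1) x - meanL1size (k + 1)))) ≤
      exp (k * (k + 1) ^ 2 / 4 * l ^ 2 / 2) := by
  have h := expect_exp_neg_mul_doobMean_le hl (add_zero (k + 1))
  simp only [doobMean_zero, ← L1size_eq_ncard_fllBall k.succ_pos, Nat.cast_add, Nat.cast_one] at h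
  calc _ = exp (l * meanL1size (k + 1)) *
        𝔼 x : Fin (k + 1) → Fin 2, exp (-(l * L1size (k + 1) x)) := by
        rw [Finset.mul_expect]
        exact Finset.expect_congr rfl fun x _ ↦ by rw [← exp_add]; ring_nf
    _ ≤ _ := mul_le_mul_of_nonneg_left h (exp_nonneg _)
    _ = _ := by rw [← exp_nat_mul, ← exp_add, ← exp_add]; ring_nf

theorem ncard_le_neg_div_card_le_exp {α : Type*} [Fintype α] {f : α → ℝ} {v t : ℝ} (hv : 0 < v)
    (ht : 0 ≤ t) (hf : ∀ l, 0 ≤ l → 𝔼 x, exp (-(l * f x)) ≤ exp (v * l ^ 2 / 2)) :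
    ({x | f x ≤ -t}.ncard : ℝ) / Fintype.card α ≤ exp (-(t ^ 2 / (2 * v))) := by
  classical
  -- This `l` minimises the exponent `v * l ^ 2 / 2 - l * t`.
  set l := t / v with hl_def
  have hl : 0 ≤ l := by positivity
  calc ({x | f x ≤ -t}.ncard : ℝ) / Fintype.card α = 𝔼 x, if f x ≤ -t then (1 : ℝ) else 0 := by
        rw [Fintype.expect_eq_sum_div_card, Finset.sum_boole, Set.ncard_eq_toFinset_card',
          Set.toFinset_ofPred]
    _ ≤ 𝔼 x, exp (-(l * t)) * exp (-(l * f x)) := by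
        refine Finset.expect_le_expect fun x _ ↦ ?_
        split_ifs with hx
        · rw [← exp_add]
          exact one_le_exp (by linarith [mul_le_mul_of_nonneg_left hx hl])
        · positivity
    _ ≤ exp (-(l * t)) * exp (v * l ^ 2 / 2) := by
        rw [← Finset.mul_expect]
        exact mul_le_mul_of_nonneg_left (hf l hl) (exp_nonneg _)
    _ = exp (-(t ^ 2 / (2 * v))) := by
        rw [← exp_add, hl_def]
        congr 1
        field_simp
        ring

end Concentration

end FLL

/-- Lower-tail concentration of `|L_1(x)|` for uniformly random binary `x ∈ Z_2^n`, `n > 3`: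
`Pr(|L_1(x)| - E[|L_1(x)|] ≤ -c·n·√(n-1)) ≤ exp(-2c²)`,
where `E[|L_1(x)|] = n²/2 - n/2 - 1/2^(n-1) + 3`. -/
theorem stmt12 (n : ℕ) (hn : 3 < n) (c : ℝ) (hc : 0 < c) :
    (Set.ncard {x : Fin n → Fin 2 |
        (L1size n x : ℝ) - ((n : ℝ) ^ 2 / 2 - (n : ℝ) / 2 - 1 / 2 ^ (n - 1) + 3)
          ≤ -(c * n * Real.sqrt ((n : ℝ) - 1))} : ℝ) / 2 ^ n
      ≤ Real.exp (-2 * c ^ 2) := by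
  obtain ⟨k, rfl⟩ : ∃ k, n = k + 1 := ⟨n - 1, by omega⟩
  have hk : (0 : ℝ) < k := by exact_mod_cast (by omega : 0 < k)
  have htail := FLL.ncard_le_neg_div_card_le_exp
    (t := c * (k + 1 : ℕ) * √((k + 1 : ℕ) - 1)) (by positivity) (by positivity)
    fun l hl ↦ FLL.expect_exp_neg_mul_L1size_sub_le hl k
  have hexponent : (c * (k + 1 : ℕ) * √((k + 1 : ℕ) - 1)) ^ 2 / (2 * (k * (k + 1) ^ 2 / 4)) =
      2 * c ^ 2 := by
    push_cast
    rw [add_sub_cancel_right, mul_pow, Real.sq_sqrt hk.le]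
    field_simp
    ring
  rw [hexponent] at htail
  simpa [FLL.meanL1size] using htail
end

section
/- Fix integers m ≥ 2 and n, i with 1 ≤ i < n. For x chosen uniformly from Z_m^n, E[f_{m,n}(x_{[i+1,n]})] = n(n-i)(m + 1/m - 2) - n/m + 1/(m-1) - 1/((m-1)m^(n-i)) + i - 1/m^(n-i). -/
open Finset

/-!
A maximal alternating segment of length `s` contributes `-s²/2 + 3s/2 - 1 = -(s - 1).choose 2` to
`f_{m,N}`, and `(s - 1).choose 2` counts the alternating factors of length at least three inside
it. Two distinct maximal alternating segments share at most one position, so each such factor lies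
in exactly one of them, and therefore
`f_{m,N}(x) = ρ(x)(mN - N - 1) - #{alternating factors of x of length at least three}`.
In a uniformly random word a fixed factor of length `d + 1 ≥ 2` is alternating with probability
`(m - 1) / m ^ d`: its second letter differs from the first, and each later letter is forced.
Linearity of expectation then leaves a geometric sum.
-/

open scoped BigOperators

section AlternatingFactors

variable {m : ℕ} {x : ℕ → Fin m} {a b c d L : ℕ}

namespace IsAltOn

lemma mono_s19 (h : IsAltOn x a b) (hac : a ≤ c) (hdb : d ≤ b) : IsAltOn x c d :=
  ⟨fun k hk => h.1 k (Ico_subset_Ico hac hdb hk),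
    fun k hk => h.2 k (Ico_subset_Ico hac (Nat.sub_le_sub_right hdb 1) hk)⟩

lemma union_s19 (h : IsAltOn x a b) (h' : IsAltOn x c d) (hlt : max a c < min b d) :
    IsAltOn x (min a c) (max b d) := by
  refine ⟨fun k hk => ?_, fun k hk => ?_⟩ <;> rw [mem_Ico] at hk
  · by_cases hk' : k ∈ Ico a b
    · exact h.1 k hk'
    · exact h'.1 k (by rw [mem_Ico] at hk' ⊢; omega)
  · by_cases hk' : k ∈ Ico a (b - 1)
    · exact h.2 k hk'
    · exact h'.2 k (by rw [mem_Ico] at hk' ⊢; omega)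

end IsAltOn

lemma isAltOn_succ_self : IsAltOn x a (a + 1) ↔ x a ≠ x (a + 1) := by
  simp [IsAltOn]

lemma isAltOn_add_two (hab : a ≤ b) :
    IsAltOn x a (b + 2) ↔ IsAltOn x a (b + 1) ∧ x (b + 2) = x b := by
  refine ⟨fun h => ⟨h.mono_s19 le_rfl (by omega), (h.2 b (by rw [mem_Ico]; omega)).symm⟩, ?_⟩
  rintro ⟨h, heq⟩
  refine ⟨fun k hk => ?_, fun k hk => ?_⟩ <;> rw [mem_Ico] at hk
  · obtain rfl | hkb : k = b + 1 ∨ k < b + 1 := by omega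
    · rw [heq]
      exact (h.1 b (by rw [mem_Ico]; omega)).symm
    · exact h.1 k (by rw [mem_Ico]; omega)
  · obtain rfl | hkb : k = b ∨ k < b := by omega
    · exact heq.symm
    · exact h.2 k (by rw [mem_Ico]; omega)

lemma isAltOn_update_of_lt (hbc : b < c) (u : Fin m) :
    IsAltOn (Function.update x c u) a b ↔ IsAltOn x a b := by
  refine and_congr (forall₂_congr fun k hk => ?_) (forall₂_congr fun k hk => ?_) <;>
  · rw [mem_Ico] at hk
    rw [Function.update_of_ne (by omega), Function.update_of_ne (by omega)]

lemma isAltOn_update_succ_self {u : Fin m} :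
    IsAltOn (Function.update x (a + 1) u) a (a + 1) ↔ u ≠ x a := by
  rw [isAltOn_succ_self, Function.update_self, Function.update_of_ne (by omega), ne_comm]

lemma isAltOn_update_add_two (hab : a ≤ b) {u : Fin m} :
    IsAltOn (Function.update x (b + 2) u) a (b + 2) ↔ IsAltOn x a (b + 1) ∧ u = x b := by
  rw [isAltOn_add_two hab, isAltOn_update_of_lt (by omega), Function.update_self,
    Function.update_of_ne (by omega)]

lemma mem_altSegs_iff_maximal {P : ℕ × ℕ} :
    P ∈ altSegs L x ↔ P.1 ≤ P.2 ∧ P.2 < L ∧ IsAltOn x P.1 P.2 ∧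
      ∀ a b, a ≤ P.1 → P.2 ≤ b → b < L → IsAltOn x a b → a = P.1 ∧ b = P.2 := by
  obtain ⟨p, q⟩ := P
  simp only [altSegs, mem_filter, mem_product, mem_range]
  constructor
  · rintro ⟨⟨-, hq⟩, hpq, halt, hleft, hright⟩
    refine ⟨hpq, hq, halt, fun a b hap hqb hb h => ⟨?_, ?_⟩⟩
    · by_contra hne
      exact hleft.elim (by omega) fun hnot => hnot (h.mono_s19 (by omega) hqb)
    · by_contra hne
      exact hright.elim (by omega) fun hnot => hnot (h.mono_s19 hap (by omega))
  · rintro ⟨hpq, hq, halt, hmax⟩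
    refine ⟨⟨by omega, hq⟩, hpq, halt, ?_, ?_⟩
    · by_contra! hext
      have := hmax (p - 1) q (by omega) le_rfl hq hext.2
      omega
    · by_contra! hext
      have := hmax p (q + 1) le_rfl (by omega) (by omega) hext.2
      omega

lemma exists_mem_altSegs_of_isAltOn (hab : a ≤ b) (hb : b < L) (h : IsAltOn x a b) :
    ∃ P ∈ altSegs L x, P.1 ≤ a ∧ b ≤ P.2 := by
  let S := {P ∈ range L ×ˢ range L | P.1 ≤ a ∧ b ≤ P.2 ∧ IsAltOn x P.1 P.2}
  have mem_S (P : ℕ × ℕ) : P ∈ S ↔ P.2 < L ∧ P.1 ≤ a ∧ b ≤ P.2 ∧ IsAltOn x P.1 P.2 := by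
    simp only [S, mem_filter, mem_product, mem_range]
    exact ⟨fun hP => ⟨hP.1.2, hP.2⟩, fun hP => ⟨⟨by omega, hP.1⟩, hP.2⟩⟩
  obtain ⟨P, hPS, hlongest⟩ :=
    S.exists_max_image (fun P => P.2 - P.1) ⟨(a, b), (mem_S _).2 ⟨hb, le_rfl, le_rfl, h⟩⟩
  obtain ⟨hPL, hPa, hbP, hP⟩ := (mem_S P).1 hPS
  refine ⟨P, mem_altSegs_iff_maximal.2 ⟨by omega, hPL, hP, fun c d hc hd hdL hcd => ?_⟩, hPa, hbP⟩
  have : d - c ≤ P.2 - P.1 :=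
    hlongest (c, d) ((mem_S _).2 ⟨hdL, hc.trans hPa, hbP.trans hd, hcd⟩)
  omega

lemma eq_of_mem_altSegs_of_overlap {P Q : ℕ × ℕ} (hP : P ∈ altSegs L x) (hQ : Q ∈ altSegs L x)
    (hlt : max P.1 Q.1 < min P.2 Q.2) : P = Q := by
  obtain ⟨-, hPL, hPalt, hPmax⟩ := mem_altSegs_iff_maximal.1 hP
  obtain ⟨-, hQL, hQalt, hQmax⟩ := mem_altSegs_iff_maximal.1 hQ
  have hunion := hPalt.union_s19 hQalt hlt
  have hP' := hPmax _ _ (by omega) (by omega) (by omega) hunion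
  have hQ' := hQmax _ _ (by omega) (by omega) (by omega) hunion
  exact Prod.ext (hP'.1.symm.trans hQ'.1) (hP'.2.symm.trans hQ'.2)

/-- The end positions `(p, q)` of the factors of length at least three inside the half-open
interval `[a, b)` of positions; both `p` and `q` belong to the factor, as in `altSegs`. -/
def gapPairs (a b : ℕ) : Finset (ℕ × ℕ) := {r ∈ Ico a b ×ˢ Ico a b | r.1 + 2 ≤ r.2}

lemma mem_gapPairs {r : ℕ × ℕ} : r ∈ gapPairs a b ↔ a ≤ r.1 ∧ r.1 + 2 ≤ r.2 ∧ r.2 < b := by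
  simp only [gapPairs, mem_filter, mem_product, mem_Ico]
  omega

lemma sum_gapPairs {M : Type*} [AddCommMonoid M] (a b : ℕ) (f : ℕ × ℕ → M) :
    ∑ r ∈ gapPairs a b, f r = ∑ q ∈ Ico a b, ∑ p ∈ Ico a (q - 1), f (p, q) := by
  rw [gapPairs, sum_filter, sum_product_right]
  refine sum_congr rfl fun q hq => ?_
  rw [← sum_filter]
  congr 1
  ext p
  simp only [mem_filter, mem_Ico] at hq ⊢
  omega

lemma card_gapPairs_succ (a b : ℕ) : #(gapPairs a (b + 1)) = (b - a).choose 2 := by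
  rcases lt_or_ge b a with hba | hab
  · rw [Nat.sub_eq_zero_of_le hba.le, Nat.choose_zero_succ, card_eq_zero,
      eq_empty_iff_forall_notMem]
    intro r hr
    rw [mem_gapPairs] at hr
    omega
  · obtain ⟨s, rfl⟩ := Nat.exists_eq_add_of_le hab
    have hs : a + s + 1 - a = s + 1 := by omega
    have hcount (k : ℕ) : a + k - 1 - a = k - 1 := by omega
    calc #(gapPairs a (a + s + 1))
        = ∑ k ∈ range (s + 1), (k - 1) := by
          rw [card_eq_sum_ones, sum_gapPairs, sum_Ico_eq_sum_range, hs]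
          simp only [← card_eq_sum_ones, Nat.card_Ico, hcount]
      _ = ∑ k ∈ range s, k := by simp [sum_range_succ']
      _ = (a + s - a).choose 2 := by
          rw [sum_range_id, Nat.add_sub_cancel_left, Nat.choose_two_right]

/-- The end positions of the alternating factors of length at least three of the word
`x_0,…,x_{L-1}`; their number is the part of `f_{m,n}` that depends on the maximal alternating
segments. -/
def longAltFactors (L : ℕ) (x : ℕ → Fin m) : Finset (ℕ × ℕ) :=
  {r ∈ gapPairs 0 L | IsAltOn x r.1 r.2}

lemma longAltFactors_eq_biUnion (L : ℕ) (x : ℕ → Fin m) :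
    longAltFactors L x = (altSegs L x).biUnion fun P => gapPairs P.1 (P.2 + 1) := by
  ext r
  simp only [longAltFactors, mem_biUnion, mem_filter, mem_gapPairs]
  constructor
  · rintro ⟨⟨-, hr, hrL⟩, halt⟩
    obtain ⟨P, hP, hPr, hrP⟩ := exists_mem_altSegs_of_isAltOn (by omega) hrL halt
    exact ⟨P, hP, hPr, hr, by omega⟩
  · rintro ⟨P, hP, hPr, hr, hrP⟩
    obtain ⟨-, hPL, hPalt, -⟩ := mem_altSegs_iff_maximal.1 hP
    exact ⟨⟨Nat.zero_le _, hr, by omega⟩, hPalt.mono_s19 hPr (by omega)⟩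

lemma card_longAltFactors (L : ℕ) (x : ℕ → Fin m) :
    #(longAltFactors L x) = ∑ P ∈ altSegs L x, (P.2 - P.1).choose 2 := by
  rw [longAltFactors_eq_biUnion, card_biUnion]
  · exact sum_congr rfl fun P _ => card_gapPairs_succ P.1 P.2
  · intro P hP Q hQ hne
    refine disjoint_left.2 fun r hrP hrQ => hne (eq_of_mem_altSegs_of_overlap hP hQ ?_)
    rw [mem_gapPairs] at hrP hrQ
    omega

lemma fM_eq_sub_card_longAltFactors (m n L : ℕ) (x : ℕ → Fin m) :
    fM m n L x = rho L x * ((m : ℝ) * n - n - 1) - #(longAltFactors L x) := by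
  have hsegs : (#(longAltFactors L x) : ℝ) =
      (sumLenSq L x : ℝ) / 2 - 3 / 2 * (sumLen L x : ℝ) + aCount L x := by
    rw [card_longAltFactors, sumLenSq, sumLen, aCount, card_eq_sum_ones]
    push_cast [Nat.cast_choose_two]
    rw [sum_div, mul_sum, ← sum_sub_distrib, ← sum_add_distrib]
    exact sum_congr rfl fun P _ => by ring
  rw [fM, hsegs]
  ring

lemma rho_succ_eq_sum (K : ℕ) (x : ℕ → Fin m) :
    (rho (K + 1) x : ℝ) = 1 + ∑ k ∈ range K, if IsAltOn x k (k + 1) then (1 : ℝ) else 0 := by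
  simp only [rho, isAltOn_succ_self, Nat.add_sub_cancel, Nat.cast_add, Nat.cast_one, sum_boole]

end AlternatingFactors

lemma sum_range_div_pow_sub {F : Type*} [Field F] {r : F} (hr : r ≠ 0) (K : ℕ) :
    ∑ p ∈ range K, (r - 1) / r ^ (K + 1 - p) = 1 / r - 1 / r ^ (K + 1) := by
  have htele : ∀ p ∈ range K,
      (r - 1) / r ^ (K + 1 - p) = 1 / r ^ (K + 1 - (p + 1)) - 1 / r ^ (K + 1 - p) := by
    intro p hp
    rw [mem_range] at hp
    rw [show K + 1 - p = K + 1 - (p + 1) + 1 by omega, pow_succ]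
    field_simp
  rw [sum_congr rfl htele, sum_range_sub fun p => 1 / r ^ (K + 1 - p)]
  simp

lemma sum_gapPairs_div_pow {F : Type*} [Field F] {r : F} (hr0 : r ≠ 0) (hr1 : r ≠ 1) (K : ℕ) :
    ∑ p ∈ gapPairs 0 (K + 1), (r - 1) / r ^ (p.2 - p.1) =
      K / r - 1 / (r - 1) + 1 / ((r - 1) * r ^ K) := by
  have hr1' : r - 1 ≠ 0 := sub_ne_zero.2 hr1
  rw [sum_gapPairs]
  simp only [Nat.Ico_zero_eq_range]
  induction K with
  | zero => simp
  | succ K ih =>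
    rw [sum_range_succ, ih, Nat.add_sub_cancel, sum_range_div_pow_sub hr0]
    push_cast
    field_simp
    ring

lemma expect_expect_update {ι α M : Type*} [Fintype ι] [DecidableEq ι] [Fintype α] [Nonempty α]
    [AddCommMonoid M] [Module ℚ≥0 M] (j : ι) (F : (ι → α) → M) :
    𝔼 y, 𝔼 c, F (Function.update y j c) = 𝔼 y, F y := by
  let swap (r : (ι → α) × α) : (ι → α) × α := (Function.update r.1 j r.2, r.1 j)
  have hswap : Function.Involutive swap := fun r => by simp [swap]
  calc 𝔼 y, 𝔼 c, F (Function.update y j c)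
      = 𝔼 r : (ι → α) × α, F (swap r).1 := by rw [← univ_product_univ, expect_product]
    _ = 𝔼 r : (ι → α) × α, F r.1 :=
        Fintype.expect_bijective swap hswap.bijective _ _ fun _ => rfl
    _ = 𝔼 y, F y := by
        rw [← univ_product_univ, expect_product]
        simp only [Fintype.expect_const]

section UniformLetter

variable {α K : Type*} [Fintype α] [DecidableEq α] [Field K] [CharZero K]

lemma expect_ite_and_eq (P : Prop) [Decidable P] (u : α) :
    𝔼 c, (if P ∧ c = u then (1 : K) else 0) = (if P then 1 else 0) / Fintype.card α := by
  simp [Fintype.expect_eq_sum_div_card, ite_and]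

lemma expect_ite_ne (u : α) :
    𝔼 c, (if c ≠ u then (1 : K) else 0) = (Fintype.card α - 1) / Fintype.card α := by
  have hcompl (c : α) : (if c ≠ u then (1 : K) else 0) = 1 - if c = u then 1 else 0 := by
    split_ifs <;> simp_all
  simp [Fintype.expect_eq_sum_div_card, hcompl, -ne_eq, -ite_not]

end UniformLetter

section RandomWord

variable {m n i : ℕ} (hm : 0 < m)

/-- The suffix `x_{[i+1,n]}` of the word `y` of length `n`, indexed from `0`; like `extWord`, it
takes the junk value `0` beyond its length `n - i`. -/
def suffixWord (i : ℕ) (y : Fin n → Fin m) : ℕ → Fin m := fun k => extWord n hm y (k + i)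

lemma suffixWord_update {j : ℕ} (hj : j + i < n) (y : Fin n → Fin m) (c : Fin m) :
    suffixWord hm i (Function.update y ⟨j + i, hj⟩ c) =
      Function.update (suffixWord hm i y) j c := by
  ext k
  rcases eq_or_ne k j with rfl | hkj
  · simp [suffixWord, extWord, hj]
  · simp [suffixWord, extWord, hkj]

lemma expect_isAltOn_suffixWord {a b : ℕ} (hab : a < b) (hb : b + i < n) :
    𝔼 y : Fin n → Fin m, (if IsAltOn (suffixWord hm i y) a b then (1 : ℝ) else 0) =
      ((m : ℝ) - 1) / (m : ℝ) ^ (b - a) := by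
  have : NeZero m := ⟨hm.ne'⟩
  induction b, hab using Nat.le_induction with
  | base =>
    rw [← expect_expect_update ⟨a + 1 + i, hb⟩]
    simp only [suffixWord_update, isAltOn_update_succ_self, expect_ite_ne, Fintype.expect_const,
      Fintype.card_fin, Nat.succ_eq_add_one, Nat.add_sub_cancel_left, pow_one]
  | succ b hab ih =>
    obtain ⟨b, rfl⟩ : ∃ k, b = k + 1 := ⟨b - 1, by omega⟩
    have hab : a ≤ b := by omega
    calc 𝔼 y : Fin n → Fin m, (if IsAltOn (suffixWord hm i y) a (b + 2) then (1 : ℝ) else 0)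
        = 𝔼 y : Fin n → Fin m,
            (if IsAltOn (suffixWord hm i y) a (b + 1) then (1 : ℝ) else 0) / m := by
          rw [← expect_expect_update ⟨b + 2 + i, hb⟩]
          simp only [suffixWord_update, isAltOn_update_add_two hab, expect_ite_and_eq,
            Fintype.card_fin]
      _ = (m - 1) / m ^ (b + 2 - a) := by
          rw [← expect_div, ih (by omega), div_div, ← pow_succ, ← Nat.sub_add_comm (by omega)]

lemma expect_rho_suffixWord {K : ℕ} (hK : K + i < n) :
    𝔼 y : Fin n → Fin m, (rho (K + 1) (suffixWord hm i y) : ℝ) = 1 + K * (((m : ℝ) - 1) / m) := by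
  have : NeZero m := ⟨hm.ne'⟩
  simp only [rho_succ_eq_sum, expect_add_distrib, Fintype.expect_const, expect_sum_comm]
  rw [sum_congr rfl fun k hk => expect_isAltOn_suffixWord hm k.lt_succ_self
    (by rw [mem_range] at hk; omega)]
  simp

lemma expect_card_longAltFactors_suffixWord (hm1 : m ≠ 1) {K : ℕ} (hK : K + i < n) :
    𝔼 y : Fin n → Fin m, (#(longAltFactors (K + 1) (suffixWord hm i y)) : ℝ) =
      K / (m : ℝ) - 1 / ((m : ℝ) - 1) + 1 / (((m : ℝ) - 1) * (m : ℝ) ^ K) := by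
  have hm0 : (m : ℝ) ≠ 0 := by positivity
  simp only [longAltFactors, ← sum_boole, expect_sum_comm]
  rw [← sum_gapPairs_div_pow hm0 (by exact_mod_cast hm1)]
  refine sum_congr rfl fun r hr => ?_
  rw [mem_gapPairs] at hr
  exact expect_isAltOn_suffixWord hm (by omega) (by omega)

end RandomWord

/-- For uniformly random `x ∈ Z_m^n` and `1 ≤ i < n`,
`E[f_{m,n}(x_{[i+1,n]})] = n(n-i)(m + 1/m - 2) - n/m + 1/(m-1) - 1/((m-1)m^(n-i)) + i - 1/m^(n-i)`. -/
theorem stmt19 (m n i : ℕ) (hm : 2 ≤ m) (hi : 1 ≤ i) (hin : i < n) :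
    (∑ y : Fin n → Fin m,
        fM m n (n - i) (fun k => extWord n (by omega) y (k + i))) / (m : ℝ) ^ n
      = (n : ℝ) * ((n : ℝ) - i) * ((m : ℝ) + 1 / m - 2) - (n : ℝ) / m
          + 1 / ((m : ℝ) - 1) - 1 / (((m : ℝ) - 1) * (m : ℝ) ^ (n - i))
          + (i : ℝ) - 1 / (m : ℝ) ^ (n - i) := by
  have hm0 : 0 < m := by omega
  obtain ⟨K, rfl⟩ : ∃ K, n = K + 1 + i := ⟨n - i - 1, by omega⟩
  have hmne : (m : ℝ) ≠ 0 := by positivity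
  have hm1 : (m : ℝ) - 1 ≠ 0 := sub_ne_zero.2 (by exact_mod_cast (by omega : m ≠ 1))
  calc (∑ y : Fin (K + 1 + i) → Fin m,
        fM m (K + 1 + i) (K + 1 + i - i) (suffixWord hm0 i y)) / (m : ℝ) ^ (K + 1 + i)
      = 𝔼 y : Fin (K + 1 + i) → Fin m, fM m (K + 1 + i) (K + 1) (suffixWord hm0 i y) := by
        simp [Fintype.expect_eq_sum_div_card]
    _ = (1 + K * (((m : ℝ) - 1) / m)) * ((m : ℝ) * ↑(K + 1 + i) - ↑(K + 1 + i) - 1) -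
          (K / (m : ℝ) - 1 / ((m : ℝ) - 1) + 1 / (((m : ℝ) - 1) * (m : ℝ) ^ K)) := by
        simp only [fM_eq_sub_card_longAltFactors, expect_sub_distrib, ← expect_mul]
        rw [expect_rho_suffixWord hm0 (by omega),
          expect_card_longAltFactors_suffixWord hm0 (by omega) (by omega)]
    _ = _ := by
        rw [Nat.add_sub_cancel]
        push_cast
        field_simp
        ring
end
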